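/- Let k̄(n) = (Σ_{k=1}^{n} k·R_{n,k}) / (Σ_{k=1}^{n} R_{n,k}) be the mean number of short chords counted across all crystallized diagrams with n chords. Then k̄(n) · √(log n / (2n)) → 1 as n → ∞; that is, k̄(n) is asymptotic to √(2n / log n). -/

import Mathlib

namespace ChordBubbles

/-- A linear chord diagram with `n` chords: a fixed-point-free involution of `Fin (2*n)`. -/
def IsDiagram (n : ℕ) (f : Equiv.Perm (Fin (2 * n))) : Prop :=
  (∀ i, f (f i) = i) ∧ ∀ i, f i ≠ i

/-- Vertex `i` is an endpoint of a short chord (a chord joining adjacent vertices). -/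
def ShortEnd (n : ℕ) (f : Equiv.Perm (Fin (2 * n))) (i : Fin (2 * n)) : Prop :=
  (f i).val = i.val + 1 ∨ (f i).val + 1 = i.val

/-- `[a, b]` delimits a bubble: a maximal nonempty interval of vertices none of which is an
endpoint of a short chord. -/
def IsBubble (n : ℕ) (f : Equiv.Perm (Fin (2 * n))) (a b : ℕ) : Prop :=
  a ≤ b ∧ b < 2 * n ∧
  (∀ i : Fin (2 * n), a ≤ i.val → i.val ≤ b → ¬ ShortEnd n f i) ∧
  (a = 0 ∨ ∃ j : Fin (2 * n), j.val + 1 = a ∧ ShortEnd n f j) ∧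
  (b + 1 = 2 * n ∨ ∃ j : Fin (2 * n), j.val = b + 1 ∧ ShortEnd n f j)

/-- The size (number of vertices) of the bubble `[a, b]`. -/
def bubbleSize (a b : ℕ) : ℕ := b + 1 - a

/-- The number of bridges of the bubble `[a, b]` under the diagram `f`: the number of chords
joining a vertex inside the bubble to one outside it. -/
noncomputable def bridges (n : ℕ) (f : Equiv.Perm (Fin (2 * n))) (a b : ℕ) : ℕ :=
  Nat.card {i : Fin (2 * n) // (a ≤ i.val ∧ i.val ≤ b) ∧ ¬ (a ≤ (f i).val ∧ (f i).val ≤ b)}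

/-- `N n q b` : the number of pairs (diagram, bubble) where the diagram has `n` chords and the
bubble has size `q` and exactly `b` bridges. -/
noncomputable def N (n q b : ℕ) : ℕ :=
  Nat.card {p : Equiv.Perm (Fin (2 * n)) × ℕ × ℕ //
    IsDiagram n p.1 ∧ IsBubble n p.1 p.2.1 p.2.2 ∧
    bubbleSize p.2.1 p.2.2 = q ∧ bridges n p.1 p.2.1 p.2.2 = b}

/-- A diagram is crystallized when all its bubbles are empty, i.e., no chord joins two vertices
lying in the same bubble. -/
def Crystallized (n : ℕ) (f : Equiv.Perm (Fin (2 * n))) : Prop :=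
  ∀ a b, IsBubble n f a b → ∀ i : Fin (2 * n),
    a ≤ i.val → i.val ≤ b → ¬ (a ≤ (f i).val ∧ (f i).val ≤ b)

/-- The number of short chords of a diagram. -/
noncomputable def shortChords (n : ℕ) (f : Equiv.Perm (Fin (2 * n))) : ℕ :=
  Nat.card {i : Fin (2 * n) // (f i).val = i.val + 1}

/-- `R n k` : the number of crystallized diagrams with `n` chords, exactly `k` of them short. -/
noncomputable def R (n k : ℕ) : ℕ :=
  Nat.card {f : Equiv.Perm (Fin (2 * n)) //
    IsDiagram n f ∧ Crystallized n f ∧ shortChords n f = k}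

/-- The mean number of short chords counted across all crystallized diagrams with `n` chords. -/
noncomputable def meanShort (n : ℕ) : ℝ :=
  (∑ k ∈ Finset.Icc 1 n, (k : ℝ) * R n k) / (∑ k ∈ Finset.Icc 1 n, (R n k : ℝ))

/-!
Put `T = √(n log n / 2)` and `k = y √(2n / log n)`. To leading exponential order, `R n k` is
`2 ^ n * n! * exp (-(y + 1 / y) * T)`. Since `y + 1 / y` has its unique minimum at `y = 1`, the
values of `k` with `|y - 1| > δ` carry a proportion of the diagrams which is at most a power of `n`
times `exp (-η * T)`, and this tends to `0`.

Deleting the short chords of a crystallized diagram leaves `m = n - k` chords and cuts their `2m`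
endpoints into `k + 1` possibly empty blocks such that no chord lies inside a block; conversely a
short chord can be inserted at each of the `k` cuts, so such block matchings are counted by `R n k`.

*Upper bound.* The left endpoints of the short chords can be chosen in at most `(2n).choose k` ways.
Construct the rest of the diagram chord by chord, always matching next a vertex of a largest
remaining block: it has at most a proportion `1 - 1 / (k + 1)` of the free vertices as possible
partners.

*Lower bound.* With labelled and oriented chords, there are `∏ qᵢ!` block matchings for each
assignment of the `2m` endpoints to the blocks that separates the two ends of every chord, where
`qᵢ` is the size of block `i`. As `∑ₓ x ^ q * exp (-x) ≤ e * q!` when `x` runs over numbers with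
unit spacing, `∏ qᵢ!` is bounded below by `∑ₓ ∏ exp (-1 - xᵢ) * xᵢ ^ qᵢ` over any set of vectors `x`
in a translate of the integer lattice, and summing `∏ xᵢ ^ qᵢ` over all admissible assignments gives
`((∑ xᵢ) ^ 2 - ∑ xᵢ ^ 2) ^ m`. Many such `x` sum to exactly `2m` with all entries close to
`2m / (k + 1)`, and for them only the factor `(1 - (1 + ε) ^ 2 / (k + 1)) ^ m` is lost.
-/

open Finset
open Filter (Tendsto atTop)
open scoped Topology

section Involutions

variable {α κ : Type*}

theorem exists_mem_card_filter_color_ne_le [Fintype κ] [DecidableEq κ] [Nonempty κ] (c : α → κ)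
    {s : Finset α} (hs : s.Nonempty) :
    ∃ v ∈ s, (#{w ∈ s | c w ≠ c v} : ℝ) ≤ #s * (1 - (Fintype.card κ : ℝ)⁻¹) := by
  have hκ : (Fintype.card κ : ℝ) ≠ 0 := by simp
  obtain ⟨i, -, hi⟩ := exists_le_card_fiber_of_nsmul_le_card_of_maps_to (s := s) (t := univ)
    (f := c) (b := (#s : ℝ) / Fintype.card κ) (fun _ _ => mem_univ _) univ_nonempty
    (by rw [card_univ, nsmul_eq_mul, mul_div_cancel₀ _ hκ])
  have hpos : (0 : ℝ) < #{w ∈ s | c w = i} :=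
    lt_of_lt_of_le (div_pos (by exact_mod_cast hs.card_pos) (by positivity)) hi
  obtain ⟨v, hv⟩ := card_pos.1 (by exact_mod_cast hpos)
  obtain ⟨hvs, rfl⟩ := mem_filter.1 hv
  refine ⟨v, hvs, ?_⟩
  have hsplit : (#{w ∈ s | c w = c v} : ℝ) + #{w ∈ s | c w ≠ c v} = #s := by
    exact_mod_cast card_filter_add_card_filter_not (s := s) (fun w => c w = c v)
  rw [mul_sub, mul_one, ← div_eq_mul_inv]
  linarith

/-- A family of involutions stabilising `s`, whose members coincide off `s` and whose chords inside
`s` all join vertices of different colours. -/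
structure IsProperFamily (c : α → κ) (s : Finset α) (F : Finset (Equiv.Perm α)) : Prop where
  involutive : ∀ f ∈ F, ∀ i, f (f i) = i
  mapsTo : ∀ f ∈ F, ∀ i ∈ s, f i ∈ s
  eq_off : ∀ f ∈ F, ∀ g ∈ F, ∀ i ∉ s, f i = g i
  color_ne : ∀ f ∈ F, ∀ i ∈ s, c (f i) ≠ c i

namespace IsProperFamily

variable {c : α → κ} {s : Finset α} {F : Finset (Equiv.Perm α)}

theorem filter_apply_eq [DecidableEq α] (h : IsProperFamily c s F) (v w : α) :
    IsProperFamily c (s \ {v, w}) {f ∈ F | f v = w} where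
  involutive f hf := h.involutive f (mem_of_mem_filter f hf)
  mapsTo f hf i hi := by
    obtain ⟨hfF, rfl⟩ := mem_filter.1 hf
    have hinv := h.involutive f hfF
    simp only [mem_sdiff, mem_insert, mem_singleton, not_or] at hi ⊢
    refine ⟨h.mapsTo f hfF i hi.1, fun hv => hi.2.2 ?_, fun hw => hi.2.1 (f.injective hw)⟩
    rw [← hv, hinv]
  eq_off f hf g hg i hi := by
    obtain ⟨hfF, rfl⟩ := mem_filter.1 hf
    obtain ⟨hgF, hgv⟩ := mem_filter.1 hg
    by_cases his : i ∈ s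
    · simp only [mem_sdiff, his, mem_insert, mem_singleton, true_and, not_not] at hi
      obtain rfl | rfl := hi
      · exact hgv.symm
      · rw [h.involutive f hfF, ← hgv, h.involutive g hgF]
    · exact h.eq_off f hfF g hgF i his
  color_ne f hf i hi := h.color_ne f (mem_of_mem_filter f hf) i (mem_sdiff.1 hi).1

theorem card_le [Fintype κ] [Nonempty κ] {j : ℕ} (h : IsProperFamily c s F) (hs : #s = 2 * j) :
    (#F : ℝ) ≤ 2 ^ j * j.factorial * (1 - (Fintype.card κ : ℝ)⁻¹) ^ j := by
  classical
  induction j generalizing s F with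
  | zero =>
    obtain rfl := card_eq_zero.1 hs
    have hF : #F ≤ 1 := card_le_one.2 fun f hf g hg =>
      Equiv.ext fun i => h.eq_off f hf g hg i (notMem_empty i)
    simpa using hF
  | succ j ih =>
    obtain ⟨v, hvs, hv⟩ := exists_mem_card_filter_color_ne_le c (s := s) (card_pos.1 (by omega))
    have hmaps : ∀ f ∈ F, f v ∈ s.filter (c · ≠ c v) := fun f hf =>
      mem_filter.2 ⟨h.mapsTo f hf v hvs, h.color_ne f hf v hvs⟩
    have hfiber : ∀ w ∈ s.filter (c · ≠ c v), (#{f ∈ F | f v = w} : ℝ) ≤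
        2 ^ j * j.factorial * (1 - (Fintype.card κ : ℝ)⁻¹) ^ j := by
      intro w hw
      obtain ⟨hws, hne⟩ := mem_filter.1 hw
      have hvw : v ≠ w := fun e => hne (e ▸ rfl)
      refine ih (h.filter_apply_eq v w) ?_
      rw [card_sdiff_of_subset (by simp [insert_subset_iff, hvs, hws]), card_pair hvw, hs]
      omega
    have hκ : (0 : ℝ) ≤ 1 - (Fintype.card κ : ℝ)⁻¹ :=
      sub_nonneg.2 (Nat.cast_inv_le_one _)
    calc (#F : ℝ) = ∑ w ∈ s.filter (c · ≠ c v), (#{f ∈ F | f v = w} : ℝ) := by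
          exact_mod_cast card_eq_sum_card_fiberwise hmaps
      _ ≤ #(s.filter (c · ≠ c v)) *
          (2 ^ j * j.factorial * (1 - (Fintype.card κ : ℝ)⁻¹) ^ j) := by
          rw [← nsmul_eq_mul]
          exact sum_le_card_nsmul _ _ _ hfiber
      _ ≤ #s * (1 - (Fintype.card κ : ℝ)⁻¹) *
          (2 ^ j * j.factorial * (1 - (Fintype.card κ : ℝ)⁻¹) ^ j) := by gcongr
      _ = _ := by
          rw [hs, Nat.factorial_succ]
          push_cast
          ring

end IsProperFamily

end Involutions

section UpperBound

theorem exists_left_end (P : ℕ → Prop) (x : ℕ) :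
    ∃ a ≤ x, (∀ i, a ≤ i → i < x → ¬ P i) ∧ (a = 0 ∨ ∃ j, j + 1 = a ∧ P j) := by
  induction x with
  | zero => exact ⟨0, le_rfl, fun i _ hi => absurd hi i.not_lt_zero, .inl rfl⟩
  | succ x ih =>
    by_cases hx : P x
    · exact ⟨x + 1, le_rfl, fun i h h' => by omega, .inr ⟨x, rfl, hx⟩⟩
    · obtain ⟨a, hax, ha, hend⟩ := ih
      refine ⟨a, by omega, fun i h h' => ?_, hend⟩
      obtain rfl | hi := eq_or_lt_of_le (Nat.le_of_lt_succ h')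
      exacts [hx, ha i h hi]

theorem exists_right_end (P : ℕ → Prop) {y M : ℕ} (hy : y ≤ M) :
    ∃ b, y ≤ b ∧ b ≤ M ∧ (∀ i, y ≤ i → i < b → ¬ P i) ∧ (b = M ∨ P b) := by
  induction hy using Nat.decreasingInduction with
  | self => exact ⟨M, le_rfl, le_rfl, fun i h h' => by omega, .inl rfl⟩
  | of_succ y hy ih =>
    by_cases hPy : P y
    · exact ⟨y, le_rfl, by omega, fun i h h' => by omega, .inr hPy⟩
    · obtain ⟨b, hyb, hbM, hb, hend⟩ := ih
      refine ⟨b, by omega, hbM, fun i h h' => ?_, hend⟩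
      obtain rfl | hi := eq_or_lt_of_le h
      exacts [hPy, hb i hi h']

variable {n : ℕ} {f g : Equiv.Perm (Fin (2 * n))}

theorem exists_isBubble {x y : ℕ} (hxy : x ≤ y) (hy : y < 2 * n)
    (h : ∀ i : Fin (2 * n), x ≤ i.val → i.val ≤ y → ¬ ShortEnd n f i) :
    ∃ a b, IsBubble n f a b ∧ a ≤ x ∧ y ≤ b := by
  let P : ℕ → Prop := fun j => ∃ i : Fin (2 * n), i.val = j ∧ ShortEnd n f i
  obtain ⟨a, hax, ha, haend⟩ := exists_left_end P x
  obtain ⟨b, hyb, hbM, hb, hbend⟩ := exists_right_end P (y := y + 1) (M := 2 * n) (by omega)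
  refine ⟨a, b - 1, ⟨by omega, by omega, fun i hai hib hi => ?_, ?_, ?_⟩, hax, by omega⟩
  · obtain hlt | hge := lt_or_ge i.val x
    · exact ha i hai hlt ⟨i, rfl, hi⟩
    · obtain hle | hgt := le_or_gt i.val y
      · exact h i hge hle hi
      · exact hb i hgt (by omega) ⟨i, rfl, hi⟩
  · obtain h0 | ⟨j, hja, i, rfl, hi⟩ := haend
    exacts [.inl h0, .inr ⟨i, hja, hi⟩]
  · obtain hM | ⟨i, hib, hi⟩ := hbend
    · exact .inl (by omega)
    · exact .inr ⟨i, by omega, hi⟩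

theorem Crystallized.exists_shortEnd (hc : Crystallized n f) {x : Fin (2 * n)} (hx : x < f x) :
    ∃ j, x ≤ j ∧ j ≤ f x ∧ ShortEnd n f j := by
  by_contra! hno
  obtain ⟨a, b, hab, hax, hfb⟩ := exists_isBubble (f := f) (Fin.le_def.1 hx.le) (f x).2
    fun i hxi hif => hno i hxi hif
  exact hc a b hab x hax ((Fin.le_def.1 hx.le).trans hfb) ⟨hax.trans (Fin.le_def.1 hx.le), hfb⟩

theorem IsDiagram.shortEnd_apply (hf : IsDiagram n f) (i : Fin (2 * n)) :
    ShortEnd n f (f i) ↔ ShortEnd n f i := by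
  simp only [ShortEnd, hf.1]
  omega

/-- The set of left endpoints of the short chords of `f`. -/
def shortLefts (f : Equiv.Perm (Fin (2 * n))) : Finset (Fin (2 * n)) :=
  {i | (f i).val = i.val + 1}

theorem mem_shortLefts {i : Fin (2 * n)} : i ∈ shortLefts f ↔ (f i).val = i.val + 1 := by
  simp only [shortLefts, mem_filter_univ]

theorem card_shortLefts (f : Equiv.Perm (Fin (2 * n))) : #(shortLefts f) = shortChords n f := by
  rw [shortChords, Nat.card_eq_fintype_card, Fintype.card_subtype, shortLefts]

theorem IsDiagram.apply_mem_shortLefts (hf : IsDiagram n f) {i : Fin (2 * n)} :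
    f i ∈ shortLefts f ↔ (f i).val + 1 = i.val := by
  rw [mem_shortLefts, hf.1, eq_comm]

theorem IsDiagram.shortEnd_iff (hf : IsDiagram n f) {i : Fin (2 * n)} :
    ShortEnd n f i ↔ i ∈ shortLefts f ∨ f i ∈ shortLefts f := by
  rw [hf.apply_mem_shortLefts, mem_shortLefts, ShortEnd]

theorem IsDiagram.card_not_shortEnd [DecidablePred (ShortEnd n f)] (hf : IsDiagram n f) :
    #{i | ¬ ShortEnd n f i} + 2 * shortChords n f = 2 * n := by
  have hends : ({i | ShortEnd n f i} : Finset (Fin (2 * n))) =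
      shortLefts f ∪ (shortLefts f).image f := by
    ext i
    rw [mem_filter_univ, mem_union, hf.shortEnd_iff, mem_image]
    exact or_congr_right
      ⟨fun h => ⟨f i, h, hf.1 i⟩, fun ⟨j, hj, hji⟩ => by rwa [← hji, hf.1]⟩
  have hdisj : Disjoint (shortLefts f) ((shortLefts f).image f) := by
    refine disjoint_left.2 fun i hi hi' => ?_
    obtain ⟨j, hj, rfl⟩ := mem_image.1 hi'
    have hr := hf.apply_mem_shortLefts.1 hi
    have hl := mem_shortLefts.1 hj
    omega
  have hcard := card_filter_add_card_filter_not (s := univ) (ShortEnd n f)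
  rw [hends, card_union_of_disjoint hdisj, card_image_of_injective _ f.injective,
    card_shortLefts, card_univ, Fintype.card_fin] at hcard
  omega

theorem IsDiagram.apply_eq_of_shortLefts_eq (hf : IsDiagram n f) (hg : IsDiagram n g)
    (h : shortLefts f = shortLefts g) {i : Fin (2 * n)} (hi : ShortEnd n f i) : f i = g i := by
  obtain hi | hi := hf.shortEnd_iff.1 hi
  · have hgi := mem_shortLefts.1 (h ▸ hi)
    exact Fin.ext ((mem_shortLefts.1 hi).trans hgi.symm)
  · have hgi : g (f i) = i :=
      Fin.ext ((mem_shortLefts.1 (h ▸ hi)).trans (hf.apply_mem_shortLefts.1 hi))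
    rw [← hg.1 (f i), hgi]

/-- The number of elements of `A` to the left of `v`: cutting the line after each element of `A`,
this is the index of the block containing `v`. -/
def blockIndex (A : Finset (Fin (2 * n))) (v : Fin (2 * n)) : Fin (#A + 1) :=
  ⟨#{a ∈ A | a < v}, Nat.lt_succ_of_le (card_filter_le _ _)⟩

theorem blockIndex_lt {A : Finset (Fin (2 * n))} {x y a : Fin (2 * n)} (ha : a ∈ A)
    (hxa : x ≤ a) (hay : a < y) : blockIndex A x < blockIndex A y := by
  refine Fin.lt_def.2 (card_lt_card ((ssubset_iff_of_subset fun b hb => ?_).2 ⟨a, ?_, ?_⟩))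
  · obtain ⟨hbA, hbx⟩ := mem_filter.1 hb
    exact mem_filter.2 ⟨hbA, hbx.trans_le (hxa.trans hay.le)⟩
  · exact mem_filter.2 ⟨ha, hay⟩
  · exact fun h => (mem_filter.1 h).2.not_ge hxa

theorem IsDiagram.blockIndex_lt (hf : IsDiagram n f) (hc : Crystallized n f) {x : Fin (2 * n)}
    (hx : ¬ ShortEnd n f x) (hlt : x < f x) :
    blockIndex (shortLefts f) x < blockIndex (shortLefts f) (f x) := by
  obtain ⟨j, hxj, hjf, hj⟩ := hc.exists_shortEnd hlt
  have hjx : x < j := hxj.lt_of_ne fun h => hx (h ▸ hj)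
  have hjfx : j < f x := hjf.lt_of_ne fun h => hx (hf.shortEnd_apply x |>.1 (h ▸ hj))
  obtain hj | hj := hf.shortEnd_iff.1 hj
  · exact ChordBubbles.blockIndex_lt hj hxj hjfx
  · have hval := hf.apply_mem_shortLefts.1 hj
    refine ChordBubbles.blockIndex_lt hj ?_ ?_ <;> simp only [Fin.le_def, Fin.lt_def] at * <;> omega

theorem IsDiagram.blockIndex_ne (hf : IsDiagram n f) (hc : Crystallized n f) {x : Fin (2 * n)}
    (hx : ¬ ShortEnd n f x) :
    blockIndex (shortLefts f) (f x) ≠ blockIndex (shortLefts f) x := by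
  obtain hlt | hgt := lt_or_gt_of_ne (hf.2 x).symm
  · exact (hf.blockIndex_lt hc hx hlt).ne'
  · have h := hf.blockIndex_lt hc (mt (hf.shortEnd_apply x).1 hx) (by rwa [hf.1])
    rw [hf.1] at h
    exact h.ne

theorem card_le_of_shortLefts_eq {A : Finset (Fin (2 * n))} {F : Finset (Equiv.Perm (Fin (2 * n)))}
    (hF : ∀ f ∈ F, IsDiagram n f ∧ Crystallized n f ∧ shortLefts f = A) :
    (#F : ℝ) ≤ 2 ^ (n - #A) * (n - #A).factorial * (1 - ((#A : ℝ) + 1)⁻¹) ^ (n - #A) := by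
  classical
  obtain rfl | ⟨f₀, hf₀⟩ := F.eq_empty_or_nonempty
  · have : (0 : ℝ) ≤ 1 - ((#A : ℝ) + 1)⁻¹ := by exact_mod_cast sub_nonneg.2 (Nat.cast_inv_le_one _)
    simp only [card_empty, Nat.cast_zero]
    positivity
  obtain ⟨hd₀, -, hA⟩ := hF f₀ hf₀
  have hshort : ∀ f ∈ F, ∀ i, ShortEnd n f i ↔ ShortEnd n f₀ i := by
    intro f hf i
    obtain ⟨hd, -, hA'⟩ := hF f hf
    have heq := hA'.trans hA.symm
    exact ⟨fun hi => by
      rwa [ShortEnd, ← hd.apply_eq_of_shortLefts_eq hd₀ heq hi], fun hi => by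
      rwa [ShortEnd, ← hd₀.apply_eq_of_shortLefts_eq hd heq.symm hi]⟩
  have hfam : IsProperFamily (blockIndex A) {i | ¬ ShortEnd n f₀ i} F := by
    refine ⟨fun f hf => (hF f hf).1.1, fun f hf i hi => ?_, fun f hf g hg i hi => ?_,
      fun f hf i hi => ?_⟩
    · simpa only [mem_filter_univ, ← hshort f hf, (hF f hf).1.shortEnd_apply] using hi
    · rw [mem_filter_univ, not_not, ← hshort f hf] at hi
      exact (hF f hf).1.apply_eq_of_shortLefts_eq (hF g hg).1
        ((hF f hf).2.2.trans (hF g hg).2.2.symm) hi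
    · rw [mem_filter_univ, ← hshort f hf] at hi
      obtain ⟨hd, hc, rfl⟩ := hF f hf
      exact hd.blockIndex_ne hc hi
  have hcard := hd₀.card_not_shortEnd
  rw [← card_shortLefts, hA] at hcard
  simpa using hfam.card_le (j := n - #A) (by omega)

theorem R_le (n k : ℕ) :
    (R n k : ℝ) ≤ (2 * n).choose k *
      (2 ^ (n - k) * (n - k).factorial * (1 - ((k : ℝ) + 1)⁻¹) ^ (n - k)) := by
  classical
  set C : Finset (Equiv.Perm (Fin (2 * n))) :=
    {f | IsDiagram n f ∧ Crystallized n f ∧ shortChords n f = k} with hC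
  have hmaps : ∀ f ∈ C, shortLefts f ∈ powersetCard k univ := fun f hf => by
    rw [mem_powersetCard_univ, card_shortLefts]
    exact ((mem_filter_univ f).1 hf).2.2
  calc (R n k : ℝ) = #C := by rw [R, Nat.card_eq_fintype_card, Fintype.card_subtype]
    _ = ∑ A ∈ powersetCard k univ, (#{f ∈ C | shortLefts f = A} : ℝ) := by
      exact_mod_cast card_eq_sum_card_fiberwise hmaps
    _ ≤ #(powersetCard k (univ : Finset (Fin (2 * n)))) *
        (2 ^ (n - k) * (n - k).factorial * (1 - ((k : ℝ) + 1)⁻¹) ^ (n - k)) := by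
      rw [← nsmul_eq_mul]
      refine sum_le_card_nsmul _ _ _ fun A hA => ?_
      obtain rfl := mem_powersetCard_univ.1 hA
      refine card_le_of_shortLefts_eq fun f hf => ?_
      obtain ⟨hfC, hfA⟩ := mem_filter.1 hf
      obtain ⟨hd, hc, -⟩ := (mem_filter_univ f).1 hfC
      exact ⟨hd, hc, hfA⟩
    _ = _ := by rw [card_powersetCard, card_univ, Fintype.card_fin]

theorem factorial_two_mul_add_mul_factorial_le (m k : ℕ) :
    (2 * (m + k)).factorial * m.factorial ≤ 4 ^ k * (m + k).factorial * (2 * m + k).factorial := by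
  induction k with
  | zero => simp [mul_comm]
  | succ k ih =>
    calc (2 * (m + (k + 1))).factorial * m.factorial
        = (2 * (m + k + 1) * (2 * m + 2 * k + 1)) * ((2 * (m + k)).factorial * m.factorial) := by
          rw [show 2 * (m + (k + 1)) = 2 * (m + k) + 1 + 1 by ring, Nat.factorial_succ,
            Nat.factorial_succ]
          ring
      _ ≤ (2 * (m + k + 1) * (2 * (2 * m + k + 1))) *
          (4 ^ k * (m + k).factorial * (2 * m + k).factorial) := by
          gcongr
          omega
      _ = 4 ^ (k + 1) * (m + (k + 1)).factorial * (2 * m + (k + 1)).factorial := by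
          rw [← add_assoc, ← add_assoc, Nat.factorial_succ (m + k), Nat.factorial_succ (2 * m + k)]
          ring

theorem factorial_mul_choose_mul_factorial_le (m k : ℕ) :
    k.factorial * (2 * (m + k)).choose k * m.factorial ≤ 4 ^ k * (m + k).factorial := by
  refine Nat.le_of_mul_le_mul_right ?_ (2 * m + k).factorial_pos
  have hchoose := Nat.choose_mul_factorial_mul_factorial (n := 2 * (m + k)) (k := k) (by omega)
  rw [show 2 * (m + k) - k = 2 * m + k by omega] at hchoose
  calc k.factorial * (2 * (m + k)).choose k * m.factorial * (2 * m + k).factorial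
      = (2 * (m + k)).factorial * m.factorial := by
        rw [← hchoose]
        ring
    _ ≤ _ := factorial_two_mul_add_mul_factorial_le m k

theorem factorial_mul_R_le (m k : ℕ) :
    k.factorial * (R (m + k) k : ℝ) ≤
      2 ^ (m + k) * (m + k).factorial * (2 ^ k * Real.exp (-(m / (k + 1)))) := by
  have hbase : 0 ≤ 1 - ((k : ℝ) + 1)⁻¹ := by exact_mod_cast sub_nonneg.2 (Nat.cast_inv_le_one _)
  have hpow : (1 - ((k : ℝ) + 1)⁻¹) ^ m ≤ Real.exp (-(m / (k + 1))) := by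
    rw [div_eq_mul_inv, ← mul_neg, Real.exp_nat_mul]
    exact pow_le_pow_left₀ hbase (Real.one_sub_le_exp_neg _) m
  have hR := R_le (m + k) k
  rw [Nat.add_sub_cancel] at hR
  calc k.factorial * (R (m + k) k : ℝ)
      ≤ k.factorial * ((2 * (m + k)).choose k *
          (2 ^ m * m.factorial * (1 - ((k : ℝ) + 1)⁻¹) ^ m)) := by gcongr
    _ = ((k.factorial * (2 * (m + k)).choose k * m.factorial : ℕ) : ℝ) * 2 ^ m *
          (1 - ((k : ℝ) + 1)⁻¹) ^ m := by push_cast; ring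
    _ ≤ ((4 ^ k * (m + k).factorial : ℕ) : ℝ) * 2 ^ m * Real.exp (-(m / (k + 1))) := by
        gcongr ?_ * 2 ^ m * ?_
        exact_mod_cast factorial_mul_choose_mul_factorial_le m k
    _ = _ := by
        push_cast
        rw [show (4 : ℝ) = 2 * 2 by norm_num, mul_pow, pow_add]
        ring

-- The free parameter `b` enters through `b ^ k / k! ≤ exp b`, which avoids Stirling's formula for
-- `k!`; the bound is used near its optimum `b = k`.
theorem R_le_exp {n k : ℕ} (hk : k ≤ n) {b : ℝ} (hb : 0 < b) :
    (R n k : ℝ) ≤ 2 ^ n * n.factorial *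
      Real.exp (b + 1 + k * (1 - Real.log b) - n / (k + 1)) := by
  obtain ⟨m, rfl⟩ := Nat.exists_eq_add_of_le' hk
  have hbk : b ^ k ≤ Real.exp b * k.factorial :=
    (div_le_iff₀ (by positivity)).1 (Real.pow_div_factorial_le_exp b hb.le k)
  have htwo : (2 : ℝ) ^ k ≤ Real.exp k := by
    rw [← Real.exp_one_pow]
    gcongr
    linarith [Real.add_one_le_exp 1]
  have hexp : (b ^ k)⁻¹ = Real.exp (-(k * Real.log b)) := by
    rw [Real.exp_neg, Real.exp_nat_mul, Real.exp_log hb]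
  have hfrac : ((m + k : ℕ) : ℝ) / (k + 1) ≤ m / (k + 1) + 1 := by
    push_cast
    rw [add_div]
    gcongr
    exact div_le_one_of_le₀ (by linarith) (by positivity)
  calc (R (m + k) k : ℝ) = (b ^ k)⁻¹ * (b ^ k * R (m + k) k) := by field_simp
    _ ≤ (b ^ k)⁻¹ * (Real.exp b * (k.factorial * R (m + k) k)) := by
        rw [← mul_assoc (Real.exp b)]
        gcongr
    _ ≤ (b ^ k)⁻¹ * (Real.exp b * (2 ^ (m + k) * (m + k).factorial *
          (Real.exp k * Real.exp (-(m / (k + 1)))))) := by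
        gcongr (b ^ k)⁻¹ * (Real.exp b * ?_)
        exact (factorial_mul_R_le m k).trans (by gcongr)
    _ = 2 ^ (m + k) * (m + k).factorial *
          Real.exp (-(k * Real.log b) + b + k + -(m / (k + 1))) := by
        rw [hexp, Real.exp_add, Real.exp_add, Real.exp_add]
        ring
    _ ≤ _ := by
        gcongr
        linarith

end UpperBound

section BlockMatchings

variable {m k : ℕ}

/-- The number of vertices in the blocks `0, …, i` of the division of `2 * m` vertices into `k + 1`
consecutive (possibly empty) blocks encoded by the monotone map `c`. -/
def blockEnd (c : Fin (2 * m) →o Fin (k + 1)) (i : ℕ) : ℕ := #{v | (c v).val ≤ i}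

theorem lt_blockEnd_iff (c : Fin (2 * m) →o Fin (k + 1)) {i : ℕ} {v : Fin (2 * m)} :
    v.val < blockEnd c i ↔ (c v).val ≤ i := by
  constructor
  · contrapose!
    intro hv
    rw [← Fin.card_Iio]
    refine card_le_card fun w hw => mem_Iio.2 (lt_of_not_ge fun hvw => ?_)
    have := Fin.le_def.1 (c.monotone hvw)
    have := (mem_filter_univ w).1 hw
    omega
  · intro hv
    rw [← Nat.succ_le_iff, Nat.succ_eq_add_one, ← Fin.card_Iic]
    refine card_le_card fun w hw => (mem_filter_univ w).2 ?_
    exact (Fin.le_def.1 (c.monotone (mem_Iic.1 hw))).trans hv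

theorem blockEnd_le (c : Fin (2 * m) →o Fin (k + 1)) (i : ℕ) : blockEnd c i ≤ 2 * m :=
  (card_filter_le _ _).trans_eq (card_fin _)

theorem blockEnd_mono (c : Fin (2 * m) →o Fin (k + 1)) : Monotone (blockEnd c) := fun _ _ hij =>
  card_le_card (monotone_filter_right _ fun _ _ hv => le_trans hv hij)

/-- The positions in the diagram obtained by inserting a short chord after each of the first `k`
blocks of `c`: `inl v` is the old vertex `v`, and `inr (i, false)`, `inr (i, true)` are the left and
right endpoints of the `i`-th short chord. -/
def insertPos (c : Fin (2 * m) →o Fin (k + 1)) : Fin (2 * m) ⊕ (Fin k × Bool) → ℕ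
  | .inl v => v.val + 2 * (c v).val
  | .inr (i, b) => blockEnd c i.val + 2 * i.val + b.toNat

theorem insertPos_lt (c : Fin (2 * m) →o Fin (k + 1)) (x : Fin (2 * m) ⊕ (Fin k × Bool)) :
    insertPos c x < 2 * (m + k) := by
  obtain v | ⟨i, b⟩ := x
  · have := v.2
    have := (c v).2
    simp only [insertPos]
    omega
  · have := blockEnd_le c i.val
    have := b.toNat_le
    simp only [insertPos]
    omega

theorem insertPos_inl_lt_inr {c : Fin (2 * m) →o Fin (k + 1)} {v : Fin (2 * m)} {i : Fin k}
    (h : (c v).val ≤ i.val) (b : Bool) : insertPos c (.inl v) < insertPos c (.inr (i, b)) := by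
  have := (lt_blockEnd_iff c).2 h
  simp only [insertPos]
  omega

theorem insertPos_inr_lt_inl {c : Fin (2 * m) →o Fin (k + 1)} {v : Fin (2 * m)} {i : Fin k}
    (h : i.val < (c v).val) (b : Bool) : insertPos c (.inr (i, b)) < insertPos c (.inl v) := by
  have := mt (lt_blockEnd_iff c).1 h.not_ge
  have := b.toNat_le
  simp only [insertPos]
  omega

theorem insertPos_inr_lt_inr (c : Fin (2 * m) →o Fin (k + 1)) {i j : Fin k} (h : i < j)
    (b b' : Bool) : insertPos c (.inr (i, b)) < insertPos c (.inr (j, b')) := by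
  have := blockEnd_mono c h.le
  have := Fin.lt_def.1 h
  have := b.toNat_le
  simp only [insertPos]
  omega

theorem insertPos_inl_strictMono (c : Fin (2 * m) →o Fin (k + 1)) :
    StrictMono fun v => insertPos c (.inl v) := fun v w hvw => by
  have := Fin.le_def.1 (c.monotone hvw.le)
  have := Fin.lt_def.1 hvw
  simp only [insertPos]
  omega

theorem insertPos_injective (c : Fin (2 * m) →o Fin (k + 1)) :
    Function.Injective (insertPos c) := by
  have hne (v i b) : insertPos c (.inl v) ≠ insertPos c (.inr (i, b)) := by
    obtain h | h := le_or_gt (c v).val i.val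
    exacts [(insertPos_inl_lt_inr h b).ne, (insertPos_inr_lt_inl h b).ne']
  rintro (v | ⟨i, b⟩) (w | ⟨j, b'⟩) h
  · rw [(insertPos_inl_strictMono c).injective h]
  · exact absurd h (hne _ _ _)
  · exact absurd h.symm (hne _ _ _)
  · obtain hij | rfl | hij := lt_trichotomy i j
    · exact absurd h (insertPos_inr_lt_inr c hij b b').ne
    · obtain rfl : b = b' := by cases b <;> cases b' <;> simp_all [insertPos]
      rfl
    · exact absurd h (insertPos_inr_lt_inr c hij b' b).ne'

/-- The bijection from the old vertices and the new endpoints to the vertices of the enlarged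
diagram. -/
noncomputable def insertEquiv (c : Fin (2 * m) →o Fin (k + 1)) :
    Fin (2 * m) ⊕ (Fin k × Bool) ≃ Fin (2 * (m + k)) :=
  Equiv.ofBijective (fun x => ⟨insertPos c x, insertPos_lt c x⟩) <| by
    refine (Fintype.bijective_iff_injective_and_card _).2 ⟨fun x y h => ?_, ?_⟩
    · exact insertPos_injective c (Fin.val_eq_of_eq h)
    · simp only [Fintype.card_sum, Fintype.card_prod, Fintype.card_fin, Fintype.card_bool]
      ring

theorem val_insertEquiv (c : Fin (2 * m) →o Fin (k + 1)) (x : Fin (2 * m) ⊕ (Fin k × Bool)) :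
    (insertEquiv c x).val = insertPos c x := rfl

variable (m k) in
/-- A division of `2 * m` vertices into `k + 1` consecutive (possibly empty) blocks together with a
perfect matching of these vertices having no chord inside a block. -/
structure BlockMatching where
  block : Fin (2 * m) →o Fin (k + 1)
  perm : Equiv.Perm (Fin (2 * m))
  involutive : ∀ v, perm (perm v) = v
  block_ne : ∀ v, block (perm v) ≠ block v

namespace BlockMatching

/-- The chord diagram obtained from `p` by inserting a short chord after each of the first `k`
blocks. -/
noncomputable def diagram (p : BlockMatching m k) : Equiv.Perm (Fin (2 * (m + k))) :=
  (insertEquiv p.block).permCongr (p.perm.sumCongr ((Equiv.refl _).prodCongr Equiv.boolNot))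

variable (p : BlockMatching m k)

theorem diagram_inl (v : Fin (2 * m)) :
    p.diagram (insertEquiv p.block (.inl v)) = insertEquiv p.block (.inl (p.perm v)) := by
  simp [diagram, Equiv.permCongr_apply]

theorem diagram_inr (i : Fin k) (b : Bool) :
    p.diagram (insertEquiv p.block (.inr (i, b))) = insertEquiv p.block (.inr (i, !b)) := by
  simp [diagram, Equiv.permCongr_apply]

theorem shortEnd_inr (i : Fin k) (b : Bool) :
    ShortEnd (m + k) p.diagram (insertEquiv p.block (.inr (i, b))) := by
  rw [ShortEnd, diagram_inr]
  cases b <;> simp [val_insertEquiv, insertPos]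

theorem exists_insertPos_between {v w : Fin (2 * m)} (h : p.block v < p.block w) :
    ∃ i : Fin k, ∀ b, insertPos p.block (.inl v) < insertPos p.block (.inr (i, b)) ∧
      insertPos p.block (.inr (i, b)) < insertPos p.block (.inl w) :=
  ⟨⟨p.block v, (Fin.lt_def.1 h).trans_le (Fin.is_le _)⟩, fun b =>
    ⟨insertPos_inl_lt_inr le_rfl b, insertPos_inr_lt_inl (Fin.lt_def.1 h) b⟩⟩

theorem not_shortEnd_inl (v : Fin (2 * m)) :
    ¬ ShortEnd (m + k) p.diagram (insertEquiv p.block (.inl v)) := by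
  rw [ShortEnd, diagram_inl, val_insertEquiv, val_insertEquiv]
  obtain h | h := lt_or_gt_of_ne (p.block_ne v) <;>
  · obtain ⟨i, hi⟩ := p.exists_insertPos_between h
    have := hi false
    omega

theorem isDiagram_diagram : IsDiagram (m + k) p.diagram := by
  constructor <;> intro x <;> obtain ⟨v | ⟨i, b⟩, rfl⟩ := (insertEquiv p.block).surjective x
  · rw [diagram_inl, diagram_inl, p.involutive]
  · rw [diagram_inr, diagram_inr, Bool.not_not]
  · rw [diagram_inl, (insertEquiv p.block).injective.ne_iff, Sum.inl_injective.ne_iff]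
    exact fun h => p.block_ne v (by rw [h])
  · rw [diagram_inr, (insertEquiv p.block).injective.ne_iff, Sum.inr_injective.ne_iff]
    simp

theorem crystallized_diagram : Crystallized (m + k) p.diagram := by
  intro a b hab x hax hxb hfx
  obtain ⟨v | ⟨i, c⟩, rfl⟩ := (insertEquiv p.block).surjective x
  · rw [diagram_inl] at hfx
    simp only [val_insertEquiv] at hax hxb hfx
    have hno (i : Fin k) : ¬ (a ≤ insertPos p.block (.inr (i, false)) ∧
        insertPos p.block (.inr (i, false)) ≤ b) := fun h =>
      hab.2.2.1 (insertEquiv p.block (.inr (i, false))) h.1 h.2 (p.shortEnd_inr i false)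
    obtain h | h := lt_or_gt_of_ne (p.block_ne v) <;>
    · obtain ⟨i, hi⟩ := p.exists_insertPos_between h
      have := hi false
      exact hno i (by omega)
  · exact hab.2.2.1 _ hax hxb (p.shortEnd_inr i c)

theorem shortChords_diagram : shortChords (m + k) p.diagram = k := by
  have hlefts : shortLefts p.diagram =
      univ.image fun i : Fin k => insertEquiv p.block (.inr (i, false)) := by
    ext x
    obtain ⟨v | ⟨i, b⟩, rfl⟩ := (insertEquiv p.block).surjective x
    · simpa [mem_shortLefts] using fun h => p.not_shortEnd_inl v (.inl h)
    · rw [mem_shortLefts, diagram_inr]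
      cases b <;> simp [val_insertEquiv, insertPos]
      omega
  rw [← card_shortLefts, hlefts, card_image_of_injective _ fun i j h => by simpa using h, card_fin]

theorem range_insertEquiv_inl :
    Set.range (fun v => insertEquiv p.block (.inl v)) =
      {x | ¬ ShortEnd (m + k) p.diagram x} := by
  ext x
  obtain ⟨v | ⟨i, b⟩, rfl⟩ := (insertEquiv p.block).surjective x
  · simp [p.not_shortEnd_inl]
  · simp [p.shortEnd_inr]

theorem diagram_injective :
    Function.Injective (diagram : BlockMatching m k → Equiv.Perm (Fin (2 * (m + k)))) := by
  intro p q h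
  have hmono (p : BlockMatching m k) : StrictMono fun v => insertEquiv p.block (.inl v) :=
    fun _ _ hvw => Fin.lt_def.2 (insertPos_inl_strictMono p.block hvw)
  have hinl : (fun v => insertEquiv p.block (.inl v)) = fun v => insertEquiv q.block (.inl v) := by
    rw [← (hmono p).range_inj (hmono q), range_insertEquiv_inl, range_insertEquiv_inl, h]
  have hblock : p.block = q.block := by
    ext v
    have := Fin.val_eq_of_eq (congrFun hinl v)
    simp only [val_insertEquiv, insertPos] at this
    omega
  have hperm : p.perm = q.perm := by
    ext1 v
    have hv := p.diagram_inl v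
    rw [h, hblock, q.diagram_inl] at hv
    exact (Sum.inl_injective ((insertEquiv q.block).injective hv)).symm
  cases p
  cases q
  congr

instance : Finite (BlockMatching m k) := Finite.of_injective _ diagram_injective

variable (m k) in
theorem card_le_R : Nat.card (BlockMatching m k) ≤ R (m + k) k :=
  Nat.card_le_card_of_injective
    (fun p => ⟨p.diagram, p.isDiagram_diagram, p.crystallized_diagram, p.shortChords_diagram⟩)
    fun _ _ h => diagram_injective (congrArg Subtype.val h)

end BlockMatching

end BlockMatchings

section Labellings

theorem card_centralizer_of_involutive {α : Type*} [Fintype α] {g : Equiv.Perm α}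
    (hinv : ∀ v, g (g v) = v) (hfix : ∀ v, g v ≠ v) {m : ℕ} (hα : Fintype.card α = 2 * m) :
    Nat.card (Subgroup.centralizer {g}) = 2 ^ m * m.factorial := by
  classical
  have hcycle := Equiv.Perm.cycleType_of_pow_prime_eq_one (p := 2) (σ := g)
    (Equiv.ext fun v => by rw [pow_two, Equiv.Perm.mul_apply, hinv, Equiv.Perm.one_apply])
  have hsupport : g.support = univ := by
    ext v
    simpa using hfix v
  have hsum := g.sum_cycleType
  rw [hsupport, card_univ, hα, hcycle, Multiset.sum_replicate, smul_eq_mul, mul_comm] at hsum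
  obtain hm : g.cycleType.card = m := Nat.eq_of_mul_eq_mul_left two_pos hsum
  rw [hm] at hcycle
  rw [Equiv.Perm.nat_card_centralizer, hcycle, hα, Multiset.sum_replicate, Multiset.prod_replicate,
    smul_eq_mul, mul_comm m 2, Nat.sub_self, Nat.factorial_zero, one_mul]
  obtain rfl | hm0 := eq_or_ne m 0
  · simp
  · rw [Multiset.toFinset_replicate, if_neg hm0, prod_singleton, Multiset.count_replicate_self]

theorem card_permCongr_eq_le_card_centralizer {α β : Type*} [Finite α] (h : Equiv.Perm β)
    (g : Equiv.Perm α) :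
    Nat.card {r : β ≃ α // r.permCongr h = g} ≤ Nat.card (Subgroup.centralizer {g}) := by
  obtain hempty | ⟨⟨r₀, hr₀⟩⟩ := isEmpty_or_nonempty {r : β ≃ α // r.permCongr h = g}
  · simp
  have hconj {r : β ≃ α} (hr : r.permCongr h = g) (x : β) : g (r x) = r (h x) := by
    rw [← hr, Equiv.permCongr_apply, Equiv.symm_apply_apply]
  refine Nat.card_le_card_of_injective (fun r => ⟨r₀.symm.trans r.1, ?_⟩) fun r r' hrr' => ?_
  · rw [Subgroup.mem_centralizer_singleton_iff]
    ext v
    obtain ⟨x, rfl⟩ := r₀.surjective v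
    simp [hconj hr₀, hconj r.2]
  · refine Subtype.ext (Equiv.ext fun x => ?_)
    simpa using congrArg (fun e : Subgroup.centralizer {g} => e.1 (r₀ x)) hrr'

variable {m k : ℕ}

/-- The involution of `Fin m × Bool` exchanging the two ends of each labelled chord. -/
def swapEnds (m : ℕ) : Equiv.Perm (Fin m × Bool) := (Equiv.refl _).prodCongr Equiv.boolNot

theorem swapEnds_swapEnds (x : Fin m × Bool) : swapEnds m (swapEnds m x) = x := by
  obtain ⟨j, b⟩ := x
  simp [swapEnds]

variable (m k) in
/-- A division of `2 * m` vertices into `k + 1` blocks together with `m` labelled and oriented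
chords, none of them inside a block. -/
def LabelledBlockMatching : Type :=
  {p : (Fin (2 * m) →o Fin (k + 1)) × (Fin m × Bool ≃ Fin (2 * m)) //
    ∀ j, p.1 (p.2 (j, false)) ≠ p.1 (p.2 (j, true))}

instance : Finite (LabelledBlockMatching m k) :=
  have : Finite (Fin (2 * m) →o Fin (k + 1)) := DFunLike.finite _
  Subtype.finite

namespace LabelledBlockMatching

theorem block_swapEnds_ne (p : LabelledBlockMatching m k) (x : Fin m × Bool) :
    p.1.1 (p.1.2 (swapEnds m x)) ≠ p.1.1 (p.1.2 x) := by
  obtain ⟨j, _ | _⟩ := x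
  exacts [(p.2 j).symm, p.2 j]

/-- The block matching obtained by forgetting the labels and orientations of the chords. -/
def toBlockMatching (p : LabelledBlockMatching m k) : BlockMatching m k where
  block := p.1.1
  perm := p.1.2.permCongr (swapEnds m)
  involutive v := by simp [Equiv.permCongr_apply, swapEnds_swapEnds]
  block_ne v := by
    simpa [Equiv.permCongr_apply] using p.block_swapEnds_ne (p.1.2.symm v)

variable (m k) in
theorem card_le :
    Nat.card (LabelledBlockMatching m k) ≤
      Nat.card (BlockMatching m k) * (2 ^ m * m.factorial) := by
  have := Fintype.ofFinite (BlockMatching m k)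
  let forget (p : LabelledBlockMatching m k) :
      Σ q : BlockMatching m k,
        {r : Fin m × Bool ≃ Fin (2 * m) // r.permCongr (swapEnds m) = q.perm} :=
    ⟨p.toBlockMatching, p.1.2, rfl⟩
  have hforget : Function.Injective forget := fun p q hpq => by
    refine Subtype.ext (Prod.ext (congrArg (fun x => x.1.block) hpq) ?_)
    exact congrArg (fun x => x.2.1) hpq
  refine (Nat.card_le_card_of_injective forget hforget).trans ?_
  rw [Nat.card_sigma, Nat.card_eq_fintype_card, ← card_univ]
  refine (sum_le_card_nsmul _ _ _ fun q _ => ?_).trans_eq (smul_eq_mul _ _)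
  refine (card_permCongr_eq_le_card_centralizer _ _).trans_eq ?_
  exact card_centralizer_of_involutive q.involutive
    (fun v h => q.block_ne v (by rw [h])) (Fintype.card_fin _)

theorem exists_orderHom_comp_eq (d : Fin m × Bool → Fin (k + 1)) :
    ∃ (c : Fin (2 * m) →o Fin (k + 1)) (r : Fin m × Bool ≃ Fin (2 * m)), c ∘ r = d := by
  let e : Fin m × Bool ≃ Fin (2 * m) := Fintype.equivFinOfCardEq (by simp [mul_comm])
  refine ⟨⟨_, Tuple.monotone_sort (d ∘ e.symm)⟩, e.trans (Tuple.sort (d ∘ e.symm)).symm, ?_⟩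
  ext x
  simp

variable (m k) in
theorem sum_prod_factorial_le :
    ∑ d : Fin m × Bool → Fin (k + 1) with ∀ j, d (j, false) ≠ d (j, true),
      ∏ i, (#{x | d x = i}).factorial ≤ Nat.card (LabelledBlockMatching m k) := by
  choose c r hcr using (exists_orderHom_comp_eq (m := m) (k := k))
  let Coloring := {d : Fin m × Bool → Fin (k + 1) // ∀ j, d (j, false) ≠ d (j, true)}
  have hstab (d : Coloring) : Nat.card {τ : Equiv.Perm (Fin m × Bool) // d.1 ∘ τ = d.1} =
      ∏ i, (#{x | d.1 x = i}).factorial := by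
    rw [Nat.card_eq_fintype_card, DomMulAct.stabilizer_card]
    simp only [Fintype.card_subtype]
  have hcomp (d : Coloring) (τ : {τ : Equiv.Perm (Fin m × Bool) // d.1 ∘ τ = d.1}) (x) :
      c d.1 (τ.1.trans (r d.1) x) = d.1 x :=
    (congrFun (hcr d.1) (τ.1 x)).trans (congrFun τ.2 x)
  let arrange (p : Σ d : Coloring, {τ : Equiv.Perm (Fin m × Bool) // d.1 ∘ τ = d.1}) :
      LabelledBlockMatching m k :=
    ⟨(c p.1.1, p.2.1.trans (r p.1.1)), fun j => by
      simpa only [hcomp p.1 p.2] using p.1.2 j⟩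
  have harrange : Function.Injective arrange := by
    rintro ⟨d, τ⟩ ⟨d', τ'⟩ h
    obtain ⟨hc, hr⟩ := Prod.ext_iff.1 (Subtype.ext_iff.1 h)
    dsimp only [arrange] at hc hr
    obtain rfl : d = d' := Subtype.ext <| funext fun x => by
      rw [← hcomp d τ, ← hcomp d' τ', hc, hr]
    obtain rfl : τ = τ' := Subtype.ext <| Equiv.ext fun x =>
      (r d.1).injective (Equiv.congr_fun hr x)
    rfl
  calc _ = ∑ d : Coloring, ∏ i, (#{x | d.1 x = i}).factorial :=
        sum_subtype _ (fun d => mem_filter_univ d) _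
    _ = Nat.card (Σ d : Coloring, {τ : Equiv.Perm (Fin m × Bool) // d.1 ∘ τ = d.1}) := by
        simp only [Nat.card_sigma, hstab]
    _ ≤ _ := Nat.card_le_card_of_injective arrange harrange

end LabelledBlockMatching

theorem sum_prod_factorial_le_R (m k : ℕ) :
    ∑ d : Fin m × Bool → Fin (k + 1) with ∀ j, d (j, false) ≠ d (j, true),
      ∏ i, (#{x | d x = i}).factorial ≤ R (m + k) k * (2 ^ m * m.factorial) :=
  calc _ ≤ Nat.card (LabelledBlockMatching m k) := LabelledBlockMatching.sum_prod_factorial_le m k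
    _ ≤ Nat.card (BlockMatching m k) * (2 ^ m * m.factorial) := LabelledBlockMatching.card_le m k
    _ ≤ _ := Nat.mul_le_mul_right _ (BlockMatching.card_le_R m k)

end Labellings

section LowerBound

open MeasureTheory

theorem pow_mul_exp_neg_le_integral (q : ℕ) {x : ℝ} (hx : 0 ≤ x) :
    x ^ q * Real.exp (-x) ≤ Real.exp 1 * ∫ t in x..x + 1, t ^ q * Real.exp (-t) := by
  have hcont : Continuous fun t : ℝ => Real.exp 1 * (t ^ q * Real.exp (-t)) := by fun_prop
  calc x ^ q * Real.exp (-x) = ∫ _ in x..x + 1, x ^ q * Real.exp (-x) := by simp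
    _ ≤ ∫ t in x..x + 1, Real.exp 1 * (t ^ q * Real.exp (-t)) := by
      refine intervalIntegral.integral_mono_on (by linarith) (by simp)
        (hcont.intervalIntegrable _ _) fun t ht => ?_
      have hexp : Real.exp (-x) ≤ Real.exp 1 * Real.exp (-t) := by
        rw [← Real.exp_add]
        gcongr
        linarith [ht.2]
      calc x ^ q * Real.exp (-x) ≤ t ^ q * (Real.exp 1 * Real.exp (-t)) :=
            mul_le_mul (pow_le_pow_left₀ hx ht.1 q) hexp (Real.exp_nonneg _)
              (pow_nonneg (hx.trans ht.1) q)
        _ = _ := by ring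
    _ = _ := intervalIntegral.integral_const_mul _ _

theorem integral_pow_mul_exp_neg_le (q : ℕ) {a b : ℝ} (ha : 0 ≤ a) (hab : a ≤ b) :
    ∫ t in a..b, t ^ q * Real.exp (-t) ≤ q.factorial := by
  have hint : IntegrableOn (fun t : ℝ => t ^ q * Real.exp (-t)) (Set.Ioi 0) :=
    (Real.GammaIntegral_convergent (s := q + 1) (by positivity)).congr_fun
      (fun t _ => by simp [mul_comm]) measurableSet_Ioi
  calc ∫ t in a..b, t ^ q * Real.exp (-t) = ∫ t in Set.Ioc a b, t ^ q * Real.exp (-t) :=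
        intervalIntegral.integral_of_le hab
    _ ≤ ∫ t in Set.Ioi 0, t ^ q * Real.exp (-t) := by
        refine setIntegral_mono_set hint ?_ (.of_forall fun t ht => ha.trans_lt ht.1)
        filter_upwards [ae_restrict_mem measurableSet_Ioi] with t (ht : 0 < t)
        exact mul_nonneg (pow_nonneg ht.le q) (Real.exp_nonneg _)
    _ = q.factorial := by
        rw [← Real.Gamma_nat_eq_factorial, Real.Gamma_eq_integral (by positivity)]
        exact setIntegral_congr_fun measurableSet_Ioi fun t _ => by simp [mul_comm]

theorem sum_pow_mul_exp_neg_le (q M : ℕ) {a : ℝ} (ha : 0 ≤ a) :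
    ∑ u ∈ range M, (a + u) ^ q * Real.exp (-(a + u)) ≤ Real.exp 1 * q.factorial := by
  have hcont : Continuous fun t : ℝ => t ^ q * Real.exp (-t) := by fun_prop
  have hsum := intervalIntegral.sum_integral_adjacent_intervals (μ := volume) (n := M)
    (a := fun u : ℕ => a + u) fun u _ => hcont.intervalIntegrable _ _
  push_cast at hsum
  calc ∑ u ∈ range M, (a + u) ^ q * Real.exp (-(a + u))
      ≤ ∑ u ∈ range M, Real.exp 1 * ∫ t in a + u..a + (u + 1), t ^ q * Real.exp (-t) := by
        refine sum_le_sum fun u _ => ?_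
        rw [← add_assoc]
        exact pow_mul_exp_neg_le_integral q (by positivity)
    _ = Real.exp 1 * ∫ t in a + (0 : ℝ)..a + M, t ^ q * Real.exp (-t) := by
        rw [← mul_sum, hsum]
    _ ≤ Real.exp 1 * q.factorial := by
        gcongr
        exact integral_pow_mul_exp_neg_le q (by simpa using ha) (by simp)

theorem sum_prod_pow_mul_exp_neg_le {κ : Type*} [Fintype κ] (U : Finset (κ → ℕ)) {a : ℝ}
    (ha : 0 ≤ a) (q : κ → ℕ) :
    ∑ u ∈ U, ∏ i, (a + u i) ^ q i * Real.exp (-(a + u i)) ≤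
      Real.exp (Fintype.card κ) * ∏ i, ((q i).factorial : ℝ) := by
  classical
  set M := (U.sup fun u => univ.sup u) + 1
  have hU : U ⊆ Fintype.piFinset fun _ => range M := fun u hu =>
    Fintype.mem_piFinset.2 fun i => mem_range.2 <| Nat.lt_succ_of_le <|
      (le_sup (f := u) (mem_univ i)).trans (le_sup (f := fun u : κ → ℕ => univ.sup u) hu)
  have hnonneg (i : κ) (u : ℕ) : 0 ≤ (a + u) ^ q i * Real.exp (-(a + u)) := by positivity
  calc ∑ u ∈ U, ∏ i, (a + u i) ^ q i * Real.exp (-(a + u i))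
      ≤ ∑ u ∈ Fintype.piFinset fun _ => range M, ∏ i, (a + u i) ^ q i * Real.exp (-(a + u i)) :=
        sum_le_sum_of_subset_of_nonneg hU fun u _ _ => prod_nonneg fun i _ => hnonneg i (u i)
    _ = ∏ i, ∑ u ∈ range M, (a + u) ^ q i * Real.exp (-(a + u)) :=
        (prod_univ_sum _ fun i (u : ℕ) => (a + u) ^ q i * Real.exp (-(a + u))).symm
    _ ≤ ∏ i, Real.exp 1 * ((q i).factorial : ℝ) :=
        prod_le_prod (fun i _ => sum_nonneg fun u _ => hnonneg i u)
          fun i _ => sum_pow_mul_exp_neg_le (q i) M ha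
    _ = _ := by rw [prod_mul_distrib, prod_const, card_univ, Real.exp_one_pow]

theorem sum_prod_apply_of_ne {ι κ : Type*} [Fintype ι] [DecidableEq ι] [Fintype κ]
    [DecidablePred fun d : ι × Bool → κ => ∀ j, d (j, false) ≠ d (j, true)] (x : κ → ℝ) :
    ∑ d : ι × Bool → κ with ∀ j, d (j, false) ≠ d (j, true), ∏ v, x (d v) =
      ((∑ i, x i) ^ 2 - ∑ i, x i ^ 2) ^ Fintype.card ι := by
  classical
  have hoffDiag : ∑ p ∈ univ.offDiag, x p.1 * x p.2 = (∑ i, x i) ^ 2 - ∑ i, x i ^ 2 := by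
    have hsplit := sum_union (disjoint_diag_offDiag (univ : Finset κ))
      (f := fun p => x p.1 * x p.2)
    rw [diag_union_offDiag, sum_diag, sum_product, ← sum_mul_sum, ← sq] at hsplit
    simp only [hsplit, sq, add_sub_cancel_left]
  rw [← hoffDiag, ← card_univ, ← prod_const, prod_univ_sum]
  refine sum_nbij' (fun d j => (d (j, false), d (j, true)))
    (fun p v => bif v.2 then (p v.1).2 else (p v.1).1) (fun d hd => ?_) (fun p hp => ?_)
    (fun d _ => ?_) (fun p _ => rfl) fun d _ => ?_
  · simpa [Fintype.mem_piFinset] using hd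
  · simpa [Fintype.mem_piFinset] using hp
  · ext ⟨j, _ | _⟩ <;> rfl
  · simp only [Fintype.prod_prod_type, Fintype.prod_bool, mul_comm]

theorem sq_sum_sub_sum_sq_pow {ι κ : Type*} [Fintype ι] [DecidableEq ι] [Fintype κ]
    [DecidableEq κ] [DecidablePred fun d : ι × Bool → κ => ∀ j, d (j, false) ≠ d (j, true)]
    (x : κ → ℝ) :
    ((∑ i, x i) ^ 2 - ∑ i, x i ^ 2) ^ Fintype.card ι = Real.exp (∑ i, x i) *
      ∑ d : ι × Bool → κ with ∀ j, d (j, false) ≠ d (j, true),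
        ∏ i, x i ^ #{v | d v = i} * Real.exp (-x i) := by
  rw [← sum_prod_apply_of_ne, mul_sum]
  refine sum_congr rfl fun d _ => ?_
  rw [prod_mul_distrib, ← Real.exp_sum, sum_neg_distrib, mul_left_comm, ← Real.exp_add,
    add_neg_cancel, Real.exp_zero, mul_one, ← prod_fiberwise' univ d x]
  simp only [prod_const]

theorem card_mul_pow_le_R_mul (m k : ℕ) (U : Finset (Fin (k + 1) → ℕ)) {a s S : ℝ} (ha : 0 ≤ a)
    (hS : 0 ≤ S) (hsum : ∀ u ∈ U, ∑ i, (a + u i) = s)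
    (hsq : ∀ u ∈ U, ∑ i, (a + u i) ^ 2 ≤ s ^ 2 - S) :
    #U * S ^ m ≤ R (m + k) k * (2 ^ m * m.factorial) * Real.exp (k + 1 + s) := by
  set proper : Finset (Fin m × Bool → Fin (k + 1)) := {d | ∀ j, d (j, false) ≠ d (j, true)}
  have hterm : ∀ u ∈ U, S ^ m ≤ Real.exp s * ∑ d ∈ proper, ∏ i,
      (a + u i) ^ #{v | d v = i} * Real.exp (-(a + u i)) := fun u hu => by
    have hpow := sq_sum_sub_sum_sq_pow (ι := Fin m) fun i => a + (u i : ℝ)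
    rw [hsum u hu, Fintype.card_fin] at hpow
    exact hpow ▸ pow_le_pow_left₀ hS (by linarith [hsq u hu]) m
  calc #U * S ^ m ≤ ∑ u ∈ U, Real.exp s * ∑ d ∈ proper, ∏ i,
        (a + u i) ^ #{v | d v = i} * Real.exp (-(a + u i)) := by
        rw [← nsmul_eq_mul]
        exact card_nsmul_le_sum _ _ _ hterm
    _ = Real.exp s * ∑ d ∈ proper, ∑ u ∈ U, ∏ i,
        (a + u i) ^ #{v | d v = i} * Real.exp (-(a + u i)) := by rw [← mul_sum, sum_comm]
    _ ≤ Real.exp s * ∑ d ∈ proper, Real.exp (k + 1) * ∏ i, ((#{v | d v = i}).factorial : ℝ) := by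
        gcongr with d
        simpa using sum_prod_pow_mul_exp_neg_le U ha fun i => #{v | d v = i}
    _ = (∑ d ∈ proper, ∏ i, (#{v | d v = i}).factorial : ℕ) * Real.exp (k + 1 + s) := by
        rw [← mul_sum, Real.exp_add (k + 1 : ℝ) s]
        push_cast
        ring
    _ ≤ _ := by
        gcongr
        exact_mod_cast sum_prod_factorial_le_R m k

theorem exists_pow_le_card_sum_eq (k D : ℕ) :
    ∃ c ≤ (k + 1) * D, (D + 1 : ℝ) ^ k / (k + 1) ≤
      #{u ∈ Fintype.piFinset fun _ : Fin (k + 1) => range (D + 1) | ∑ i, u i = c} := by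
  have hmaps : ∀ u ∈ Fintype.piFinset fun _ : Fin (k + 1) => range (D + 1),
      ∑ i, u i ∈ range ((k + 1) * D + 1) := fun u hu => by
    rw [mem_range_succ_iff]
    simpa using sum_le_card_nsmul univ u D fun i _ =>
      mem_range_succ_iff.1 (Fintype.mem_piFinset.1 hu i)
  have hcard : #(range ((k + 1) * D + 1)) • ((D + 1 : ℝ) ^ k / (k + 1)) ≤
      #(Fintype.piFinset fun _ : Fin (k + 1) => range (D + 1)) := by
    rw [Fintype.card_piFinset_const, card_range, card_range, nsmul_eq_mul, mul_div_left_comm]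
    push_cast
    rw [pow_succ]
    gcongr
    rw [div_le_iff₀ (by positivity)]
    linarith [show (0 : ℝ) ≤ k by positivity]
  obtain ⟨c, hc, h⟩ :=
    exists_le_card_fiber_of_nsmul_le_card_of_maps_to hmaps nonempty_range_add_one hcard
  exact ⟨c, mem_range_succ_iff.1 hc, h⟩

theorem pow_mul_pow_le_R_mul (m k D : ℕ) {l S : ℝ} (hD : D ≤ l) (hS : 0 ≤ S)
    (hlS : (k + 1) * (l + D) ^ 2 ≤ ((k + 1) * l) ^ 2 - S) :
    (D + 1 : ℝ) ^ k / (k + 1) * S ^ m ≤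
      R (m + k) k * (2 ^ m * m.factorial) * Real.exp (k + 1 + (k + 1) * l) := by
  obtain ⟨c, hc, hcard⟩ := exists_pow_le_card_sum_eq k D
  have hk : (0 : ℝ) < k + 1 := by positivity
  have hcD : (c : ℝ) / (k + 1) ≤ D := by
    rw [div_le_iff₀ hk, mul_comm]
    exact_mod_cast hc
  refine le_trans (by gcongr) (card_mul_pow_le_R_mul m k _ (a := l - c / (k + 1)) (by linarith) hS
    (fun u hu => ?_) fun u hu => ?_)
  · rw [sum_add_distrib, ← Nat.cast_sum, (mem_filter.1 hu).2, sum_const, card_univ,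
      Fintype.card_fin, nsmul_eq_mul]
    push_cast
    field_simp
    ring
  · refine (sum_le_card_nsmul _ _ ((l + D) ^ 2) fun i _ => ?_).trans (by simpa using hlS)
    have hui : (u i : ℝ) ≤ D := by
      exact_mod_cast mem_range_succ_iff.1 (Fintype.mem_piFinset.1 (mem_filter.1 hu).1 i)
    have : 0 ≤ (c : ℝ) / (k + 1) := by positivity
    have : (0 : ℝ) ≤ u i := by positivity
    gcongr <;> linarith

theorem two_pow_mul_factorial_sq_le {m : ℕ} (hm : m ≠ 0) :
    ((2 : ℝ) ^ m * m.factorial) ^ 2 ≤ m * ((2 * m) ^ 2) ^ m * Real.exp (2 - 2 * m) := by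
  have hm' : (0 : ℝ) < m := by positivity
  have hstirling : Stirling.stirlingSeq m ≤ Real.exp 1 / √2 := by
    obtain ⟨j, rfl⟩ := Nat.exists_eq_succ_of_ne_zero hm
    exact (Stirling.stirlingSeq'_antitone (Nat.zero_le j)).trans_eq Stirling.stirlingSeq_one
  have hfactorial : (m.factorial : ℝ) ≤ Real.exp 1 * √m * (m / Real.exp 1) ^ m := by
    rw [Stirling.stirlingSeq, div_le_iff₀ (by positivity), Real.sqrt_mul two_pos.le] at hstirling
    refine hstirling.trans_eq ?_
    field_simp
  calc ((2 : ℝ) ^ m * m.factorial) ^ 2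
      ≤ (2 ^ m * (Real.exp 1 * √m * (m / Real.exp 1) ^ m)) ^ 2 := by gcongr
    _ = √m ^ 2 * ((2 * m) ^ 2) ^ m * (Real.exp 1 ^ 2 / (Real.exp 1 ^ m) ^ 2) := by
        rw [div_pow, pow_right_comm, mul_pow 2 (m : ℝ) m]
        ring
    _ = _ := by
        rw [Real.sq_sqrt hm'.le, Real.exp_sub, Real.exp_one_pow, ← Real.exp_nat_mul,
          ← Real.exp_nat_mul]
        norm_num

theorem two_pow_mul_factorial_add_le (m k : ℕ) :
    2 ^ (m + k) * (m + k).factorial ≤ (2 * (m + k)) ^ k * (2 ^ m * m.factorial) := by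
  calc 2 ^ (m + k) * (m + k).factorial
      = 2 ^ (m + k) * ((m + 1).ascFactorial k * m.factorial) := by
        rw [← Nat.factorial_mul_ascFactorial, mul_comm m.factorial]
    _ ≤ 2 ^ (m + k) * ((m + k) ^ k * m.factorial) := by
        gcongr
        exact Nat.ascFactorial_le_pow_add m k
    _ = _ := by rw [mul_pow, pow_add]; ring

variable {m k : ℕ} {ε : ℝ}

theorem one_add_sq_div_le_one (hk : 3 ≤ k) (hε : 0 < ε) (hε1 : ε ≤ 1) :
    (1 + ε) ^ 2 / (k + 1) ≤ 1 := by
  have : (3 : ℝ) ≤ k := by exact_mod_cast hk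
  rw [div_le_one₀ (by positivity)]
  nlinarith

theorem mul_div_pow_mul_pow_le_R_mul (hk : 3 ≤ k) (hkm : k ≤ m) (hε : 0 < ε) (hε1 : ε ≤ 1) :
    (ε * ((m + k) / (k + 1))) ^ k * ((2 * m) ^ 2 * (1 - (1 + ε) ^ 2 / (k + 1))) ^ m ≤
      (k + 1) * (R (m + k) k * (2 ^ m * m.factorial) * Real.exp (k + 1 + 2 * m)) := by
  set l : ℝ := 2 * m / (k + 1)
  have hl : (k + 1) * l = 2 * m := by simp only [l]; field_simp
  have hl0 : 0 ≤ l := by positivity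
  have hD : (⌊ε * l⌋₊ : ℝ) ≤ ε * l := Nat.floor_le (by positivity)
  have hS : 0 ≤ (2 * m) ^ 2 * (1 - (1 + ε) ^ 2 / (k + 1)) :=
    mul_nonneg (by positivity) (sub_nonneg.2 (one_add_sq_div_le_one hk hε hε1))
  have hlS : (k + 1) * (l + ⌊ε * l⌋₊) ^ 2 ≤
      ((k + 1) * l) ^ 2 - (2 * m) ^ 2 * (1 - (1 + ε) ^ 2 / (k + 1)) := by
    calc (k + 1) * (l + ⌊ε * l⌋₊) ^ 2 ≤ (k + 1) * (l + ε * l) ^ 2 := by gcongr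
      _ = ((k + 1) * l) ^ 2 - ((k + 1) * l) ^ 2 * (1 - (1 + ε) ^ 2 / (k + 1)) := by
        field_simp
        ring
      _ = _ := by rw [hl]
  have hlower := pow_mul_pow_le_R_mul m k ⌊ε * l⌋₊ (hD.trans (mul_le_of_le_one_left hl0 hε1)) hS hlS
  rw [hl, div_mul_eq_mul_div, div_le_iff₀' (by positivity)] at hlower
  refine le_trans ?_ hlower
  have hbase : ε * ((m + k) / (k + 1)) ≤ ⌊ε * l⌋₊ + 1 := by
    have : (k : ℝ) ≤ m := by exact_mod_cast hkm
    calc ε * ((m + k) / (k + 1)) ≤ ε * l := by simp only [l]; gcongr; linarith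
      _ ≤ _ := (Nat.lt_floor_add_one _).le
  gcongr

theorem two_pow_mul_factorial_mul_le_R_mul (hk : 3 ≤ k) (hkm : k ≤ m) (hε : 0 < ε) (hε1 : ε ≤ 1) :
    2 ^ (m + k) * (m + k).factorial * ((ε / (2 * (k + 1))) ^ k * (1 - (1 + ε) ^ 2 / (k + 1)) ^ m) ≤
      R (m + k) k * (m * (k + 1) * Real.exp (k + 3)) := by
  have hm : m ≠ 0 := by omega
  have ht := sub_nonneg.2 (one_add_sq_div_le_one hk hε hε1)
  set t : ℝ := (1 + ε) ^ 2 / (k + 1)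
  have hfactorial : (2 : ℝ) ^ (m + k) * (m + k).factorial ≤
      (2 * (m + k)) ^ k * (2 ^ m * m.factorial) := by
    exact_mod_cast two_pow_mul_factorial_add_le m k
  have hpos : (0 : ℝ) < ((2 * m) ^ 2) ^ m := by positivity
  refine le_of_mul_le_mul_right ?_ hpos
  calc _ ≤ (2 * (m + k)) ^ k * (2 ^ m * m.factorial) *
          ((ε / (2 * (k + 1))) ^ k * (1 - t) ^ m) * ((2 * m) ^ 2) ^ m := by gcongr
    _ = (2 ^ m * m.factorial) * ((ε * ((m + k) / (k + 1))) ^ k * ((2 * m) ^ 2 * (1 - t)) ^ m) := by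
        rw [show ε * ((m + k) / (k + 1)) = 2 * (m + k) * (ε / (2 * (k + 1))) by field_simp,
          mul_pow _ (ε / _), mul_pow _ (1 - t)]
        ring
    _ ≤ (2 ^ m * m.factorial) * ((k + 1) *
          (R (m + k) k * (2 ^ m * m.factorial) * Real.exp (k + 1 + 2 * m))) := by
        gcongr ?_ * ?_
        exact mul_div_pow_mul_pow_le_R_mul hk hkm hε hε1
    _ = R (m + k) k * (k + 1) * Real.exp (k + 1 + 2 * m) * (2 ^ m * m.factorial) ^ 2 := by ring
    _ ≤ R (m + k) k * (k + 1) * Real.exp (k + 1 + 2 * m) *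
          (m * ((2 * m) ^ 2) ^ m * Real.exp (2 - 2 * m)) := by
        gcongr
        exact two_pow_mul_factorial_sq_le hm
    _ = _ := by
        rw [show (k + 3 : ℝ) = k + 1 + 2 * m + (2 - 2 * m) by ring, Real.exp_add _ (2 - 2 * _)]
        ring

theorem exp_neg_div_sub_le_one_sub_div {c x : ℝ} (hx : 0 < x) (hcx : c < x) :
    Real.exp (-(c / (x - c))) ≤ 1 - c / x := by
  have hsub : 0 < x - c := sub_pos.2 hcx
  rw [Real.exp_neg, one_sub_div hx.ne', ← inv_div x]
  refine inv_anti₀ (by positivity) ?_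
  calc x / (x - c) = c / (x - c) + 1 := by field_simp; ring
    _ ≤ _ := Real.add_one_le_exp _

theorem exp_neg_le_one_sub_div_pow (hk : 4 ≤ k) {c : ℝ} (hc : 0 ≤ c) (hc4 : c ≤ 4) {n : ℕ}
    (hmn : m ≤ n) : Real.exp (-(c * (n / (k - 3)))) ≤ (1 - c / (k + 1)) ^ m := by
  have hk4 : (4 : ℝ) ≤ k := by exact_mod_cast hk
  have hk3 : (0 : ℝ) < k - 3 := by linarith
  calc Real.exp (-(c * (n / (k - 3)))) ≤ Real.exp (-(m * (c / (k + 1 - c)))) := by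
        rw [mul_div_left_comm]
        exact Real.exp_le_exp.2 <| neg_le_neg <| mul_le_mul (by exact_mod_cast hmn)
          (div_le_div_of_nonneg_left hc hk3 (by linarith)) (div_nonneg hc (by linarith))
          (by positivity)
    _ = Real.exp (-(c / (k + 1 - c))) ^ m := by rw [← mul_neg, Real.exp_nat_mul]
    _ ≤ _ := by
        gcongr
        exact exp_neg_div_sub_le_one_sub_div (by linarith) (by linarith)

theorem exp_le_R {n : ℕ} (hk : 4 ≤ k) (hkn : 2 * k ≤ n) (hε : 0 < ε) (hε1 : ε ≤ 1) :
    2 ^ n * n.factorial * Real.exp (-((1 + ε) ^ 2 * (n / (k - 3)) + k * Real.log (k + 1) +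
      k * (1 + Real.log (2 / ε)) + 2 * Real.log n + 3)) ≤ R n k := by
  obtain ⟨m, rfl⟩ := Nat.exists_eq_add_of_le' (show k ≤ n by omega)
  have hm : (0 : ℝ) < m := by exact_mod_cast (by omega : 0 < m)
  have hbase : Real.exp (-(k * Real.log (k + 1) + k * Real.log (2 / ε))) =
      (ε / (2 * (k + 1))) ^ k := by
    rw [← mul_add, ← Real.log_mul (by positivity) (by positivity), ← mul_neg, ← Real.log_inv,
      Real.exp_nat_mul, Real.exp_log (by positivity)]
    congr 1
    field_simp
  have hdecay := exp_neg_le_one_sub_div_pow hk (sq_nonneg (1 + ε)) (by nlinarith)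
    (Nat.le_add_right m k)
  have hfactor : Real.exp (-(2 * Real.log (m + k : ℕ))) ≤ (m * (k + 1) : ℝ)⁻¹ := by
    rw [← Real.log_rpow (by positivity), Real.exp_neg, Real.exp_log (by positivity), Real.rpow_two,
      sq]
    push_cast
    have : (1 : ℝ) ≤ m := by exact_mod_cast (by omega : 1 ≤ m)
    exact inv_anti₀ (by positivity)
      (mul_le_mul (by linarith) (by linarith) (by positivity) (by positivity))
  have hR := two_pow_mul_factorial_mul_le_R_mul (m := m) (k := k) (by omega) (by omega) hε hε1
  rw [← div_le_iff₀ (by positivity)] at hR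
  refine le_trans ?_ hR
  calc _ = 2 ^ (m + k) * (m + k).factorial *
        (Real.exp (-(k * Real.log (k + 1) + k * Real.log (2 / ε))) *
          Real.exp (-((1 + ε) ^ 2 * ((m + k : ℕ) / (k - 3))))) *
        (Real.exp (-(2 * Real.log (m + k : ℕ))) * Real.exp (-(k + 3))) := by
        simp only [mul_assoc, ← Real.exp_add]
        ring_nf
    _ ≤ 2 ^ (m + k) * (m + k).factorial *
        ((ε / (2 * (k + 1))) ^ k * (1 - (1 + ε) ^ 2 / (k + 1)) ^ m) *
        ((m * (k + 1) : ℝ)⁻¹ * Real.exp (-(k + 3))) := by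
        have := (Real.exp_nonneg _).trans hdecay
        rw [hbase]
        gcongr
    _ = _ := by rw [Real.exp_neg, ← mul_inv, ← div_eq_mul_inv]

end LowerBound

section Asymptotics

open Asymptotics

theorem abs_weighted_mean_sub_le {ι : Type*} {s : Finset ι} {w f : ι → ℝ} {y δ η : ℝ}
    (hw : ∀ i ∈ s, 0 ≤ w i) (hW : 0 < ∑ i ∈ s, w i) (hδ : 0 ≤ δ) (hη : 0 ≤ η)
    (h : ∀ i ∈ s, |f i - y| ≤ δ ∨ |f i - y| * w i ≤ η * ∑ j ∈ s, w j) :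
    |(∑ i ∈ s, f i * w i) / ∑ i ∈ s, w i - y| ≤ δ + #s * η := by
  have hbound : ∀ i ∈ s, |(f i - y) * w i| ≤ δ * w i + η * ∑ j ∈ s, w j := fun i hi => by
    rw [abs_mul, abs_of_nonneg (hw i hi)]
    rcases h i hi with hclose | hlight
    · exact le_add_of_le_of_nonneg (mul_le_mul_of_nonneg_right hclose (hw i hi)) (by positivity)
    · exact le_add_of_nonneg_of_le (mul_nonneg hδ (hw i hi)) hlight
  rw [div_sub' hW.ne', abs_div, abs_of_pos hW, div_le_iff₀ hW]
  calc |∑ i ∈ s, f i * w i - (∑ i ∈ s, w i) * y| = |∑ i ∈ s, (f i - y) * w i| := by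
        simp only [sub_mul, sum_sub_distrib, sum_mul, mul_comm y]
    _ ≤ ∑ i ∈ s, |(f i - y) * w i| := abs_sum_le_sum_abs _ _
    _ ≤ ∑ i ∈ s, (δ * w i + η * ∑ j ∈ s, w j) := sum_le_sum hbound
    _ = _ := by rw [sum_add_distrib, ← mul_sum, sum_const, nsmul_eq_mul]; ring

/-- The scale `√(2n / log n)` of the number of short chords. -/
noncomputable def typicalShort (n : ℕ) : ℝ := √(2 * n / Real.log n)

/-- The scale `√(n log n / 2)` of the logarithm of `R n k / (2 ^ n * n!)`: this ratio is about
`exp (-(y + 1 / y) * decayRate n)` when `k = y * typicalShort n`. -/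
noncomputable def decayRate (n : ℕ) : ℝ := √(n * Real.log n / 2)

theorem decayRate_nonneg (n : ℕ) : 0 ≤ decayRate n :=
  Real.sqrt_nonneg _

theorem typicalShort_pos {n : ℕ} (hn : 1 < n) : 0 < typicalShort n := by
  have := Real.log_pos (Nat.one_lt_cast.2 hn)
  exact Real.sqrt_pos.2 (by positivity)

theorem typicalShort_mul_decayRate {n : ℕ} (hn : 1 < n) : typicalShort n * decayRate n = n := by
  have := Real.log_pos (Nat.one_lt_cast.2 hn)
  rw [typicalShort, decayRate, ← Real.sqrt_mul (by positivity), Real.sqrt_eq_iff_mul_self_eq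
    (by positivity) (by positivity)]
  field_simp

theorem typicalShort_mul_log {n : ℕ} (hn : 1 < n) :
    typicalShort n * Real.log n = 2 * decayRate n := by
  have := Real.log_pos (Nat.one_lt_cast.2 hn)
  rw [← sq_eq_sq₀ (by rw [typicalShort]; positivity) (by rw [decayRate]; positivity), mul_pow,
    mul_pow, typicalShort, decayRate, Real.sq_sqrt (by positivity), Real.sq_sqrt (by positivity)]
  field_simp

theorem sqrt_log_div_eq_inv_typicalShort (n : ℕ) :
    √(Real.log n / (2 * n)) = (typicalShort n)⁻¹ := by
  rw [typicalShort, ← Real.sqrt_inv, inv_div]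

theorem tendsto_log_natCast_atTop : Tendsto (fun n : ℕ => Real.log n) atTop atTop :=
  Real.tendsto_log_atTop.comp tendsto_natCast_atTop_atTop

theorem tendsto_typicalShort_atTop : Tendsto typicalShort atTop atTop := by
  have hdiv : Tendsto (fun n : ℕ => Real.log n / n) atTop (𝓝[>] 0) := by
    refine tendsto_nhdsWithin_iff.2 ⟨(Real.isLittleO_log_id_atTop.comp_tendsto
      tendsto_natCast_atTop_atTop).tendsto_div_nhds_zero, ?_⟩
    filter_upwards [Filter.eventually_gt_atTop 1] with n hn
    exact div_pos (Real.log_pos (Nat.one_lt_cast.2 hn)) (by positivity)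
  refine Real.tendsto_sqrt_atTop.comp ((hdiv.inv_tendsto_nhdsGT_zero.const_mul_atTop two_pos).congr
    fun n => ?_)
  rw [Pi.inv_apply, inv_div, mul_div_assoc]

theorem typicalShort_isLittleO_decayRate : typicalShort =o[atTop] decayRate := by
  refine isLittleO_iff_exists_eq_mul.2
    ⟨_, tendsto_log_natCast_atTop.const_div_atTop 2, ?_⟩
  filter_upwards [Filter.eventually_gt_atTop 1] with n hn
  have := Real.log_pos (Nat.one_lt_cast.2 hn)
  rw [Pi.mul_apply, div_mul_eq_mul_div, ← typicalShort_mul_log hn, mul_div_cancel_right₀ _ this.ne']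

theorem log_isLittleO_decayRate : (fun n : ℕ => Real.log n) =o[atTop] decayRate := by
  refine isLittleO_iff_exists_eq_mul.2
    ⟨_, tendsto_typicalShort_atTop.const_div_atTop 2, ?_⟩
  filter_upwards [Filter.eventually_gt_atTop 1] with n hn
  rw [Pi.mul_apply, div_mul_eq_mul_div, ← typicalShort_mul_log hn,
    mul_div_cancel_left₀ _ (typicalShort_pos hn).ne']

theorem one_isLittleO_decayRate : (fun _ : ℕ => (1 : ℝ)) =o[atTop] decayRate :=
  ((isLittleO_const_left_of_ne one_ne_zero).2
    (tendsto_norm_atTop_atTop.comp tendsto_typicalShort_atTop)).trans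
    typicalShort_isLittleO_decayRate

theorem eventually_mul_log_le_log_typicalShort {d : ℝ} (hd : d < 1) :
    ∀ᶠ n : ℕ in atTop, d * (Real.log n / 2) ≤ Real.log (typicalShort n) - 1 := by
  have hloglog : (fun x : ℝ => Real.log x + 2) =o[atTop] id :=
    Real.isLittleO_log_id_atTop.add (isLittleO_const_id_atTop 2)
  filter_upwards [Filter.eventually_gt_atTop 1, tendsto_log_natCast_atTop.eventually
    (hloglog.def (sub_pos.2 hd))] with n hn hsmall
  have hlog := Real.log_pos (Nat.one_lt_cast.2 hn)
  have hn0 : (0 : ℝ) < n := by positivity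
  rw [id, Real.norm_of_nonneg hlog.le] at hsmall
  rw [typicalShort, Real.log_sqrt (by positivity), Real.log_div (by positivity) hlog.ne',
    Real.log_mul two_ne_zero hn0.ne']
  linarith [Real.le_norm_self (Real.log (Real.log n) + 2), Real.log_pos one_lt_two]

theorem two_add_sq_div_two_le_add_inv {y h : ℝ} (hy : 0 < y) (h0 : 0 ≤ h) (h1 : h ≤ 1)
    (hyh : h ≤ |y - 1|) : 2 + h ^ 2 / 2 ≤ y + y⁻¹ := by
  have hsq : h ^ 2 ≤ (y - 1) ^ 2 := sq_le_sq.2 (by rwa [abs_of_nonneg h0])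
  have hmul : h ^ 2 / 2 * y ≤ (y - 1) ^ 2 := by
    have hh1 : h ^ 2 ≤ 1 := pow_le_one₀ h0 h1
    rcases le_total y 2 with h2 | h2 <;> nlinarith
  calc 2 + h ^ 2 / 2 = (2 * y + h ^ 2 / 2 * y) / y := by field_simp
    _ ≤ (2 * y + (y - 1) ^ 2) / y := by gcongr
    _ = y + y⁻¹ := by field_simp; ring

theorem R_le_exp_neg_mul_decayRate {n k : ℕ} (hn : 1 < n) (hk : k ≤ n) {c : ℝ} (hc : 0 ≤ c)
    (hc1 : c ≤ 1) (hlog : (1 - c / 6) * (Real.log n / 2) ≤ Real.log (typicalShort n) - 1)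
    (hsmall : 2 * typicalShort n ≤ c / 4 * decayRate n)
    (hgap : 2 + c ≤ (k + 1) / typicalShort n + ((k + 1) / typicalShort n)⁻¹) :
    R n k ≤ 2 ^ n * n.factorial * Real.exp (-((2 + c / 4) * decayRate n)) := by
  have hb := typicalShort_pos hn
  have hbT := typicalShort_mul_decayRate hn
  have hbL := typicalShort_mul_log hn
  set b := typicalShort n
  set T := decayRate n
  set y := (k + 1) / b
  have hT : 0 ≤ T := decayRate_nonneg n
  have hy : 0 ≤ y := by positivity
  have hky : k = y * b - 1 := by simp only [y]; field_simp; ring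
  have hn_div : n / (k + 1) = T * y⁻¹ := by rw [← hbT]; simp only [y]; field_simp
  clear_value y
  have hslope : (1 - c / 6) * (y * T) ≤ y * b * (Real.log b - 1) := by
    calc (1 - c / 6) * (y * T) = y * b * ((1 - c / 6) * (Real.log n / 2)) := by
          linear_combination -(1 - c / 6) * y / 2 * hbL
      _ ≤ _ := by gcongr
  have hconst : b + Real.log b ≤ c / 4 * T := by
    linarith [Real.log_le_sub_one_of_pos hb]
  have hrate : (2 + c / 2) * T ≤ (1 - c / 6) * (y * T) + T * y⁻¹ := by
    calc (2 + c / 2) * T ≤ (1 - c / 6) * (2 + c) * T := by gcongr; nlinarith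
      _ ≤ (1 - c / 6) * (y + y⁻¹) * T := by gcongr; linarith
      _ ≤ _ := by nlinarith [show 0 ≤ c / 6 * (y⁻¹ * T) by positivity]
  refine (R_le_exp hk hb).trans ?_
  gcongr
  rw [hn_div, hky]
  linarith

theorem exists_eventually_R_le {δ : ℝ} (hδ : 0 < δ) :
    ∃ η > 0, ∀ᶠ n : ℕ in atTop, ∀ k ≤ n, δ < |k / typicalShort n - 1| →
      R n k ≤ 2 ^ n * n.factorial * Real.exp (-((2 + η) * decayRate n)) := by
  set h := min 1 (δ / 2)
  have hh0 : 0 < h := by positivity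
  have hh1 : h ≤ 1 := min_le_left _ _
  set c := h ^ 2 / 2
  have hc : 0 < c := by positivity
  have hc1 : c ≤ 1 := by
    have hsq : h ^ 2 ≤ 1 := pow_le_one₀ hh0.le hh1
    simp only [c]
    linarith
  refine ⟨c / 4, by positivity, ?_⟩
  filter_upwards [Filter.eventually_gt_atTop 1,
    eventually_mul_log_le_log_typicalShort (d := 1 - c / 6) (by linarith),
    typicalShort_isLittleO_decayRate.def (show 0 < c / 8 by positivity),
    tendsto_typicalShort_atTop.eventually_ge_atTop (2 / δ)] with n hn hlog hsmall hlarge k hk hdev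
  have hb := typicalShort_pos hn
  rw [Real.norm_of_nonneg hb.le, Real.norm_of_nonneg (decayRate_nonneg n)] at hsmall
  refine R_le_exp_neg_mul_decayRate hn hk hc.le hc1 hlog (by linarith) <|
    two_add_sq_div_two_le_add_inv (by positivity) hh0.le hh1 ?_
  have hinv : |(k + 1) / typicalShort n - k / typicalShort n| ≤ δ / 2 := by
    rw [← sub_div, add_sub_cancel_left, abs_of_pos (by positivity), one_div]
    simpa using inv_anti₀ (by positivity) hlarge
  linarith [min_le_right 1 (δ / 2), abs_sub_le (k / typicalShort n) ((k + 1) / typicalShort n) 1,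
    abs_sub_comm (k / typicalShort n) ((k + 1) / typicalShort n)]

theorem sq_le_of_le_typicalShort_add_five {n : ℕ} (hn : 1 < n) (hlarge : 5 ≤ typicalShort n)
    (hsmall : 4 * typicalShort n ≤ decayRate n) {x : ℝ} (hx : 0 ≤ x)
    (hxb : x ≤ typicalShort n + 5) : x ^ 2 ≤ n := by
  calc x ^ 2 ≤ (2 * typicalShort n) ^ 2 := by gcongr; linarith
    _ = typicalShort n * (4 * typicalShort n) := by ring
    _ ≤ typicalShort n * decayRate n := by gcongr
    _ = n := typicalShort_mul_decayRate hn

theorem lower_exponent_le {n : ℕ} (hn : 1 < n) {ε x : ℝ} (hε : 0 < ε) (hε1 : ε ≤ 1)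
    (hx : typicalShort n + 3 ≤ x) (hx' : x ≤ typicalShort n + 4) (hsq : (x + 1) ^ 2 ≤ n)
    (herror : (1 + Real.log (2 / ε)) * (typicalShort n + 4) + 4 * Real.log n + 3 ≤
      ε * decayRate n) :
    (1 + ε) ^ 2 * (n / (x - 3)) + x * Real.log (x + 1) + x * (1 + Real.log (2 / ε)) +
      2 * Real.log n + 3 ≤ (2 + 4 * ε) * decayRate n := by
  have hb := typicalShort_pos hn
  have hT := decayRate_nonneg n
  have hdecay : (1 + ε) ^ 2 * (n / (x - 3)) ≤ (1 + 3 * ε) * decayRate n := by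
    refine mul_le_mul (by nlinarith) ?_ (div_nonneg n.cast_nonneg (by linarith)) (by positivity)
    rw [div_le_iff₀ (by linarith), ← typicalShort_mul_decayRate hn, mul_comm]
    exact mul_le_mul_of_nonneg_left (by linarith) hT
  have hentropy : x * Real.log (x + 1) ≤ decayRate n + 2 * Real.log n := by
    have hlog := Real.log_le_log (by nlinarith) hsq
    rw [Real.log_pow, Nat.cast_ofNat] at hlog
    have hlog0 : 0 ≤ Real.log (x + 1) := Real.log_nonneg (by linarith)
    calc x * Real.log (x + 1) ≤ (typicalShort n + 4) * (Real.log n / 2) := by gcongr; linarith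
      _ = _ := by linear_combination typicalShort_mul_log hn / 2
  have hlogε : 0 ≤ Real.log (2 / ε) := Real.log_nonneg (by rw [one_le_div hε]; linarith)
  have hlinear : x * (1 + Real.log (2 / ε)) ≤
      (1 + Real.log (2 / ε)) * (typicalShort n + 4) := by
    rw [mul_comm]
    gcongr
  linarith

theorem exists_exp_le_R_of_le {n : ℕ} (hn : 1 < n) {ε : ℝ} (hε : 0 < ε) (hε1 : ε ≤ 1)
    (hlarge : 5 ≤ typicalShort n) (hsmall : 4 * typicalShort n ≤ decayRate n)
    (herror : (1 + Real.log (2 / ε)) * (typicalShort n + 4) + 4 * Real.log n + 3 ≤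
      ε * decayRate n) :
    ∃ k ∈ Icc 1 n, 2 ^ n * n.factorial * Real.exp (-((2 + 4 * ε) * decayRate n)) ≤ R n k := by
  obtain ⟨k, hk3, hk4⟩ : ∃ k : ℕ, typicalShort n + 3 ≤ k ∧ (k : ℝ) ≤ typicalShort n + 4 :=
    ⟨⌈typicalShort n⌉₊ + 3, by push_cast; linarith [Nat.le_ceil (typicalShort n)],
      by push_cast; linarith [Nat.ceil_lt_add_one (show 0 ≤ typicalShort n by linarith)]⟩
  have hsq : (k + 1 : ℝ) ^ 2 ≤ n :=
    sq_le_of_le_typicalShort_add_five hn hlarge hsmall (by positivity) (by linarith)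
  have hk : 4 ≤ k := by exact_mod_cast (by linarith : (4 : ℝ) ≤ k)
  have hkn : 2 * k ≤ n := by
    have : (k + 1) ^ 2 ≤ n := by exact_mod_cast hsq
    nlinarith
  refine ⟨k, mem_Icc.2 ⟨by omega, by omega⟩, le_trans ?_ (exp_le_R hk hkn hε hε1)⟩
  gcongr
  exact lower_exponent_le hn hε hε1 hk3 hk4 hsq herror

theorem eventually_exists_exp_le_R {η : ℝ} (hη : 0 < η) :
    ∀ᶠ n : ℕ in atTop, ∃ k ∈ Icc 1 n,
      2 ^ n * n.factorial * Real.exp (-((2 + η) * decayRate n)) ≤ R n k := by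
  set ε := min 1 (η / 4)
  have hε : 0 < ε := by positivity
  set C := 1 + Real.log (2 / ε)
  have herror : (fun n : ℕ => C * typicalShort n + 4 * Real.log n + (4 * C + 3) * 1) =o[atTop]
      decayRate :=
    ((typicalShort_isLittleO_decayRate.const_mul_left C).add
      (log_isLittleO_decayRate.const_mul_left 4)).add
      (one_isLittleO_decayRate.const_mul_left (4 * C + 3))
  filter_upwards [Filter.eventually_gt_atTop 1, tendsto_typicalShort_atTop.eventually_ge_atTop 5,
    typicalShort_isLittleO_decayRate.def (show (0 : ℝ) < 1 / 4 by norm_num), herror.def hε]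
    with n hn hlarge hsmall herr
  rw [Real.norm_of_nonneg (decayRate_nonneg n)] at hsmall herr
  obtain ⟨k, hk, hle⟩ := exists_exp_le_R_of_le hn hε (min_le_left _ _) hlarge
    (by linarith [Real.le_norm_self (typicalShort n)])
    (by linarith [Real.le_norm_self (C * typicalShort n + 4 * Real.log n + (4 * C + 3) * 1)])
  have hT := decayRate_nonneg n
  refine ⟨k, hk, le_trans ?_ hle⟩
  gcongr
  linarith [min_le_right 1 (η / 4)]

theorem eventually_sq_mul_exp_neg_le {η δ : ℝ} (hη : 0 < η) (hδ : 0 < δ) :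
    ∀ᶠ n : ℕ in atTop, (n : ℝ) ^ 2 * Real.exp (-(η * decayRate n)) ≤ δ := by
  have hsmall : (fun n : ℕ => 2 * Real.log n + -Real.log δ * 1) =o[atTop] decayRate :=
    (log_isLittleO_decayRate.const_mul_left 2).add (one_isLittleO_decayRate.const_mul_left _)
  filter_upwards [Filter.eventually_gt_atTop 0, hsmall.def hη] with n hn hle
  rw [Real.norm_of_nonneg (decayRate_nonneg n)] at hle
  rw [← Real.exp_log (show (0 : ℝ) < n by positivity), ← Real.exp_nat_mul, ← Real.exp_add,
    ← Real.le_log_iff_exp_le hδ]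
  push_cast
  linarith [Real.le_norm_self (2 * Real.log n + -Real.log δ * 1)]

theorem abs_div_typicalShort_sub_one_le {n k : ℕ} (hb : 1 ≤ typicalShort n) (hk : k ∈ Icc 1 n) :
    |k / typicalShort n - 1| ≤ n := by
  obtain ⟨hk1, hkn⟩ := mem_Icc.1 hk
  have hk1 : (1 : ℝ) ≤ k := by exact_mod_cast hk1
  have hkn : (k : ℝ) ≤ n := by exact_mod_cast hkn
  have hle : k / typicalShort n ≤ n := (div_le_self (by positivity) hb).trans hkn
  have hnonneg : 0 ≤ k / typicalShort n := by positivity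
  rw [abs_le]
  constructor <;> linarith

theorem eventually_R_concentrated {δ : ℝ} (hδ : 0 < δ) :
    ∀ᶠ n : ℕ in atTop, 0 < ∑ k ∈ Icc 1 n, (R n k : ℝ) ∧ ∀ k ∈ Icc 1 n,
      |k / typicalShort n - 1| ≤ δ ∨
        |k / typicalShort n - 1| * R n k ≤ δ / n * ∑ j ∈ Icc 1 n, (R n j : ℝ) := by
  obtain ⟨η, hη, hupper⟩ := exists_eventually_R_le hδ
  filter_upwards [Filter.eventually_gt_atTop 0, tendsto_typicalShort_atTop.eventually_ge_atTop 1,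
    hupper, eventually_exists_exp_le_R (half_pos hη), eventually_sq_mul_exp_neg_le (half_pos hη) hδ]
    with n hn hb hupper ⟨k₀, hk₀, hlower⟩ hexp
  set M : ℝ := 2 ^ n * n.factorial * Real.exp (-((2 + η / 2) * decayRate n))
  have hM : 0 < M := by positivity
  have hsum : M ≤ ∑ k ∈ Icc 1 n, (R n k : ℝ) :=
    hlower.trans (single_le_sum (f := fun k => (R n k : ℝ)) (fun _ _ => Nat.cast_nonneg _) hk₀)
  refine ⟨hM.trans_le hsum, fun k hk => (le_or_gt _ δ).imp_right fun hdev => ?_⟩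
  have hn0 : (0 : ℝ) < n := by positivity
  calc |k / typicalShort n - 1| * R n k
      ≤ n * (2 ^ n * n.factorial * Real.exp (-((2 + η) * decayRate n))) :=
        mul_le_mul (abs_div_typicalShort_sub_one_le hb hk) (hupper k (mem_Icc.1 hk).2 hdev)
          (Nat.cast_nonneg _) hn0.le
    _ = n * Real.exp (-(η / 2 * decayRate n)) * M := by
        rw [show -((2 + η) * decayRate n) =
          -(η / 2 * decayRate n) + -((2 + η / 2) * decayRate n) by ring, Real.exp_add]
        ring
    _ ≤ δ / n * M := by
        gcongr
        rw [le_div_iff₀ hn0]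
        linarith
    _ ≤ δ / n * ∑ j ∈ Icc 1 n, (R n j : ℝ) := by gcongr

end Asymptotics

/-- The mean number of short chords in crystallized diagrams with `n` chords is asymptotic to
`√(2n / log n)` as `n → ∞`. -/
theorem meanShort_asymptotic :
    Filter.Tendsto (fun n : ℕ => meanShort n * Real.sqrt (Real.log n / (2 * (n : ℝ))))
      Filter.atTop (nhds 1) := by
  refine Metric.tendsto_nhds.2 fun ε hε => ?_
  filter_upwards [Filter.eventually_gt_atTop 0,
    eventually_R_concentrated (show 0 < ε / 3 by positivity)] with n hn ⟨hpos, hconc⟩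
  have hn0 : (n : ℝ) ≠ 0 := by positivity
  have hmean : meanShort n * √(Real.log n / (2 * n)) =
      (∑ k ∈ Icc 1 n, k / typicalShort n * (R n k : ℝ)) / ∑ k ∈ Icc 1 n, (R n k : ℝ) := by
    rw [sqrt_log_div_eq_inv_typicalShort, meanShort, div_mul_eq_mul_div, sum_mul]
    simp only [div_eq_mul_inv, mul_right_comm]
  have hdev := abs_weighted_mean_sub_le (fun _ _ => Nat.cast_nonneg _) hpos (by positivity)
    (by positivity) hconc
  rw [Real.dist_eq, hmean]
  calc _ ≤ ε / 3 + #(Icc 1 n) * (ε / 3 / n) := hdev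
    _ = 2 * (ε / 3) := by rw [Nat.card_Icc, Nat.add_sub_cancel]; field_simp; ring
    _ < ε := by linarith

end ChordBubbles
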